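/- arXiv:1710.11402 — 2 statements merged into one kernel-verified Lean document; each statement's English description precedes it below -/
import Mathlib

section
/- Let α ≥ 0 and let μ be a probability measure on [0,∞) with regularly varying tail of index −α. Then μ is Boolean-subexponential: for every integer n ≥ 1, if ρ is a probability measure on ℝ such that K_ρ(z) = n·K_μ(z) for all z ∈ ℂ⁺ (so that ρ = μ^{⊎n} is the n-fold additive Boolean convolution power of μ), then ρ(y,∞)/(n·μ(y,∞)) → 1 as y → ∞. -/
open MeasureTheory Filter Set Complex

noncomputable section

/-- The Cauchy transform of a measure `τ` on `ℝ`: `G_τ(z) = ∫ 1/(z − t) dτ(t)`. -/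
def cauchyG (τ : Measure ℝ) (z : ℂ) : ℂ := ∫ t, (z - (t : ℂ))⁻¹ ∂τ

/-- The K-transform `K_τ(z) = z − 1/G_τ(z)`. -/
def Ktrans (τ : Measure ℝ) (z : ℂ) : ℂ := z - (cauchyG τ z)⁻¹

/-- `μ` has a regularly varying tail of index `−α`. -/
def RegVarTail (μ : Measure ℝ) (α : ℝ) : Prop :=
  (∀ x : ℝ, 0 ≤ x → 0 < μ (Set.Ioi x)) ∧
  ∀ t : ℝ, 0 < t →
    Filter.Tendsto (fun x : ℝ => (μ (Set.Ioi (t * x))).toReal / (μ (Set.Ioi x)).toReal)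
      Filter.atTop (nhds (t ^ (-α)))

/-!
The inversion `t ↦ y / t` turns the tails of `μ` and `ρ` beyond `y` into masses on `(0, 1)`. The
Cauchy transforms `G`, `G'` of the inverted measures satisfy the Möbius relation
`G' (1 - (1 - c) w G) = c G`, where `c` is the Boolean exponent. Integrate `G' - c G` over the unit
circle against a polynomial multiple of `(w² - 1)³`, whose triple zeros absorb the singularities at
`±1`. The mass of the inverted `μ` beyond `2` contributes a function `ε`-small and holomorphic on
the disc with `ε → 0`, so Cauchy's theorem removes its pure contribution and leaves an error
`O(δ (ε + δ))`, where `δ = μ(y / 2, ∞)`. By regular variation this is `o(μ(y, ∞))`. Weierstrass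
approximation passes from polynomials to continuous test functions, with which the indicators of
half-lines are sandwiched. A contour argument of the same kind shows that `ρ`, like `μ`, lives on
`[0, ∞)`.
-/

open Asymptotics Polynomial
open scoped Topology ComplexConjugate

section CauchyTransform

variable {σ : Measure ℝ} {w : ℂ}

lemma abs_im_le_norm_sub_ofReal (w : ℂ) (s : ℝ) : |w.im| ≤ ‖w - s‖ := by
  simpa using abs_im_le_norm (w - s)

lemma norm_inv_sub_ofReal_le (hw : w.im ≠ 0) (s : ℝ) : ‖(w - s)⁻¹‖ ≤ |w.im|⁻¹ := by
  rw [norm_inv]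
  exact inv_anti₀ (abs_pos.2 hw) (abs_im_le_norm_sub_ofReal w s)

lemma integrable_inv_sub_of_le_norm_sub [IsFiniteMeasure σ] {d : ℝ} (hd : 0 < d)
    (h : ∀ᵐ s : ℝ ∂σ, d ≤ ‖w - s‖) : Integrable (fun s : ℝ ↦ (w - s)⁻¹) σ := by
  refine Integrable.of_bound (by fun_prop) d⁻¹ ?_
  filter_upwards [h] with s hs
  rw [norm_inv]
  exact inv_anti₀ hd hs

lemma integrable_inv_sub_of_im_ne_zero [IsFiniteMeasure σ] (hw : w.im ≠ 0) :
    Integrable (fun s : ℝ ↦ (w - s)⁻¹) σ :=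
  integrable_inv_sub_of_le_norm_sub (abs_pos.2 hw) (ae_of_all _ (abs_im_le_norm_sub_ofReal w))

lemma norm_cauchyG_le [IsFiniteMeasure σ] (hw : w.im ≠ 0) :
    ‖cauchyG σ w‖ ≤ σ.real univ / |w.im| := by
  rw [div_eq_inv_mul]
  exact norm_integral_le_of_norm_le_const (ae_of_all _ (norm_inv_sub_ofReal_le hw))

lemma cauchyG_conj (σ : Measure ℝ) (w : ℂ) : cauchyG σ (conj w) = conj (cauchyG σ w) := by
  simp [cauchyG, ← integral_conj]

lemma cauchyG_ne_zero [IsFiniteMeasure σ] [NeZero σ] (hw : w.im ≠ 0) : cauchyG σ w ≠ 0 := by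
  intro hzero
  have hne (s : ℝ) : w - s ≠ 0 := fun h ↦ hw (by simpa using congrArg im h)
  have hinv := integrable_inv_sub_of_im_ne_zero (σ := σ) hw
  have him (s : ℝ) : (normSq (w - s))⁻¹ = (-w.im)⁻¹ * ((w - s)⁻¹).im := by
    simp [inv_im, div_eq_mul_inv, hw]
  have h_int : Integrable (fun s : ℝ ↦ (normSq (w - s))⁻¹) σ := by
    simpa only [him, RCLike.im_to_complex] using hinv.im.const_mul (-w.im)⁻¹
  have hintegral : ∫ s : ℝ, (normSq (w - s))⁻¹ ∂σ = 0 := by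
    have him_zero : ∫ s : ℝ, ((w - s)⁻¹).im ∂σ = (cauchyG σ w).im := integral_im hinv
    simp only [him, integral_const_mul, him_zero, hzero, zero_im, mul_zero]
  have hpos (s : ℝ) : 0 < (normSq (w - s))⁻¹ := inv_pos.2 (normSq_pos.2 (hne s))
  have hsupport : Function.support (fun s : ℝ ↦ (normSq (w - s))⁻¹) = univ :=
    eq_univ_of_forall fun s ↦ (hpos s).ne'
  have := (integral_pos_iff_support_of_nonneg (fun s ↦ (hpos s).le) h_int).2
    (by simp [hsupport, NeZero.ne σ])
  exact this.ne' hintegral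

lemma differentiableAt_cauchyG [IsFiniteMeasure σ] {d : ℝ} (hd : 0 < d)
    (h : ∀ᵐ s : ℝ ∂σ, d ≤ ‖w - s‖) : DifferentiableAt ℂ (cauchyG σ) w := by
  have hfar : ∀ᵐ s : ℝ ∂σ, ∀ u ∈ Metric.ball w (d / 2), d / 2 ≤ ‖u - s‖ := by
    filter_upwards [h] with s hs u hu
    have hdist : ‖w - u‖ < d / 2 := by rwa [← mem_ball_iff_norm']
    linarith [norm_sub_le_norm_sub_add_norm_sub w u (s : ℂ)]
  refine (hasDerivAt_integral_of_dominated_loc_of_deriv_le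
    (F := fun (u : ℂ) (s : ℝ) ↦ (u - s)⁻¹) (F' := fun (u : ℂ) (s : ℝ) ↦ -1 / (u - s) ^ 2)
    (bound := fun _ ↦ ((d / 2) ^ 2)⁻¹) (Metric.ball_mem_nhds w (half_pos hd))
    (Eventually.of_forall fun u ↦ by fun_prop) (integrable_inv_sub_of_le_norm_sub hd h)
    (Measurable.aestronglyMeasurable (by fun_prop)) ?_ (integrable_const _) ?_).2.differentiableAt
  · filter_upwards [hfar] with s hs u hu
    rw [norm_div, norm_neg, norm_one, one_div, norm_pow]
    have := hs u hu
    gcongr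
  · filter_upwards [hfar] with s hs u hu
    have hne : u - s ≠ 0 := norm_pos_iff.1 ((half_pos hd).trans_le (hs u hu))
    exact ((hasDerivAt_id u).sub_const (s : ℂ)).fun_inv hne

end CauchyTransform

section EdgeKernel

/-- An entire weight on the disc with centre `x` and radius `r`, with triple zeros at the endpoints
`x ± r` of its real diameter. On the circle it is `O(|Im w|³)`, which compensates the
singularities that products of Cauchy transforms may have at these two points. -/
def edgeKernel (x r : ℝ) (q : ℂ → ℂ) (w : ℂ) : ℂ := ((w - x) ^ 2 - r ^ 2) ^ 3 * q w

variable {x r : ℝ} {q : ℂ → ℂ} {w : ℂ} {σ : Measure ℝ}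

lemma differentiable_edgeKernel (hq : Differentiable ℂ q) :
    Differentiable ℂ (edgeKernel x r q) := by
  unfold edgeKernel; fun_prop

lemma norm_edgeKernel (hw : ‖w - x‖ = r) :
    ‖edgeKernel x r q w‖ = 8 * r ^ 3 * |w.im| ^ 3 * ‖q w‖ := by
  have hfactor : (w - x) ^ 2 - (r : ℂ) ^ 2 = (w - x) * (2 * I * w.im) := by
    have hconj : (w - x) - conj (w - x) = 2 * I * w.im := by
      rw [sub_conj]; simp; ring
    rw [← hconj, mul_sub, mul_conj', hw, sq]
  simp only [edgeKernel, hfactor, norm_mul, norm_pow, hw, norm_I, norm_real, Real.norm_eq_abs,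
    norm_ofNat]
  ring

lemma edgeKernel_eq_zero_of_im_eq_zero (hw : ‖w - x‖ = r) (him : w.im = 0) :
    edgeKernel x r q w = 0 := by
  simp [← norm_eq_zero, norm_edgeKernel hw, him]

lemma edgeKernel_mul_inv_sub_of_abs_eq {s : ℝ} (hs : |s - x| = r) :
    (fun w ↦ edgeKernel x r q w * (w - s)⁻¹) =
      fun w ↦ (w - s) ^ 2 * (w + s - 2 * x) ^ 3 * q w := by
  have hsq : (r : ℂ) ^ 2 = (s - x) ^ 2 := by
    rw [← hs]; exact_mod_cast sq_abs (s - x)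
  funext w
  rcases eq_or_ne w s with rfl | hws
  · simp
  · have := sub_ne_zero.2 hws
    rw [edgeKernel, hsq]
    field_simp
    ring

lemma circleIntegral_edgeKernel_mul_inv_sub_of_le_abs (hr : 0 ≤ r) (hq : Differentiable ℂ q)
    {s : ℝ} (hs : r ≤ |s - x|) : (∮ w in C(x, r), edgeKernel x r q w * (w - s)⁻¹) = 0 := by
  suffices h : DifferentiableOn ℂ (fun w ↦ edgeKernel x r q w * (w - s)⁻¹)
      (Metric.closedBall x r) from (h.diffContOnCl_ball Subset.rfl).circleIntegral_eq_zero hr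
  refine fun w hw ↦ DifferentiableAt.differentiableWithinAt ?_
  rcases hs.eq_or_lt with hs | hs
  · rw [edgeKernel_mul_inv_sub_of_abs_eq hs.symm]
    fun_prop
  · have hne : w - s ≠ 0 := by
      rintro h
      rw [sub_eq_zero.1 h, Metric.mem_closedBall, isometry_ofReal.dist_eq, Real.dist_eq] at hw
      exact hs.not_ge hw
    have := differentiable_edgeKernel (x := x) (r := r) hq w
    fun_prop (disch := assumption)

lemma circleIntegral_edgeKernel_mul_inv_sub (hr : 0 ≤ r) (hq : Differentiable ℂ q) (s : ℝ) :
    (∮ w in C(x, r), edgeKernel x r q w * (w - s)⁻¹) =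
      (Ioo (x - r) (x + r)).indicator (fun s : ℝ ↦ 2 * Real.pi * I * edgeKernel x r q s) s := by
  have hmem : s ∈ Ioo (x - r) (x + r) ↔ |s - x| < r := by
    rw [← Real.ball_eq_Ioo, Metric.mem_ball, Real.dist_eq]
  by_cases hs : |s - x| < r
  · rw [indicator_of_mem (hmem.2 hs)]
    have := (differentiable_edgeKernel (x := x) (r := r) hq).diffContOnCl
      |>.circleIntegral_sub_inv_smul (c := x) (R := r) (w := s)
      (by rwa [Metric.mem_ball, isometry_ofReal.dist_eq, Real.dist_eq])
    simpa only [smul_eq_mul, mul_comm] using this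
  · rw [indicator_of_notMem (mt hmem.1 hs),
      circleIntegral_edgeKernel_mul_inv_sub_of_le_abs hr hq (not_lt.1 hs)]

lemma norm_edgeKernel_mul_inv_sub_le {B : ℝ} (hw : ‖w - x‖ = r) (hB : ‖q w‖ ≤ B) (s : ℝ) :
    ‖edgeKernel x r q w * (w - s)⁻¹‖ ≤ 8 * r ^ 5 * B := by
  have hr : 0 ≤ r := hw ▸ norm_nonneg _
  have hB0 : 0 ≤ B := (norm_nonneg _).trans hB
  by_cases him : w.im = 0
  · rw [edgeKernel_eq_zero_of_im_eq_zero hw him, zero_mul, norm_zero]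
    positivity
  have him_le : |w.im| ≤ r := hw ▸ abs_im_le_norm_sub_ofReal w x
  calc ‖edgeKernel x r q w * (w - s)⁻¹‖
      ≤ 8 * r ^ 3 * |w.im| ^ 3 * B * |w.im|⁻¹ := by
        rw [norm_mul, norm_edgeKernel hw]
        gcongr
        exact norm_inv_sub_ofReal_le him s
    _ = 8 * r ^ 3 * |w.im| ^ 2 * B := by field_simp [abs_ne_zero.2 him]
    _ ≤ 8 * r ^ 3 * r ^ 2 * B := by gcongr
    _ = 8 * r ^ 5 * B := by ring

lemma integrable_edgeKernel_mul_inv_sub_prod [IsFiniteMeasure σ] (hr : 0 ≤ r)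
    (hq : Differentiable ℂ q) :
    Integrable (fun p : ℝ × ℝ ↦ deriv (circleMap x r) p.1 •
      (edgeKernel x r q (circleMap x r p.1) * (circleMap x r p.1 - p.2)⁻¹))
      ((volume.restrict (Ioc 0 (2 * Real.pi))).prod σ) := by
  obtain ⟨B, hB⟩ := (isCompact_sphere (x : ℂ) r).exists_bound_of_continuousOn
    hq.continuous.continuousOn
  refine Integrable.of_bound ?_ (r * (8 * r ^ 5 * B)) (ae_of_all _ fun p ↦ ?_)
  · have hkernel := (differentiable_edgeKernel (x := x) (r := r) hq).continuous
    simp only [deriv_circleMap]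
    fun_prop
  · have hsphere := circleMap_mem_sphere (x : ℂ) hr p.1
    rw [norm_smul, deriv_circleMap, norm_mul, norm_I, mul_one, norm_circleMap_zero,
      abs_of_nonneg hr]
    gcongr
    exact norm_edgeKernel_mul_inv_sub_le (mem_sphere_iff_norm.1 hsphere) (hB _ hsphere) p.2

lemma circleIntegrable_edgeKernel_mul_cauchyG [IsFiniteMeasure σ] (hr : 0 ≤ r)
    (hq : Differentiable ℂ q) :
    CircleIntegrable (fun w ↦ edgeKernel x r q w * cauchyG σ w) x r := by
  rw [circleIntegrable_iff, intervalIntegrable_iff, uIoc_of_le (by positivity)]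
  simpa only [IntegrableOn, smul_eq_mul, integral_const_mul, cauchyG] using
    (integrable_edgeKernel_mul_inv_sub_prod (σ := σ) hr hq).integral_prod_left

lemma circleIntegral_edgeKernel_mul_cauchyG [IsFiniteMeasure σ] (hr : 0 ≤ r)
    (hq : Differentiable ℂ q) :
    (2 * Real.pi * I : ℂ)⁻¹ • (∮ w in C(x, r), edgeKernel x r q w * cauchyG σ w) =
      ∫ s in Ioo (x - r) (x + r), edgeKernel x r q (s : ℝ) ∂σ := by
  have hpi : (0 : ℝ) ≤ 2 * Real.pi := by positivity
  have hunfold : (∮ w in C(x, r), edgeKernel x r q w * cauchyG σ w) =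
      ∫ θ in Ioc 0 (2 * Real.pi), ∫ s, deriv (circleMap x r) θ •
        (edgeKernel x r q (circleMap x r θ) * (circleMap x r θ - s)⁻¹) ∂σ := by
    simp only [circleIntegral, intervalIntegral.integral_of_le hpi, smul_eq_mul,
      integral_const_mul, cauchyG]
  have hswap : (∮ w in C(x, r), edgeKernel x r q w * cauchyG σ w) =
      ∫ s : ℝ, (∮ w in C(x, r), edgeKernel x r q w * (w - s)⁻¹) ∂σ := by
    rw [hunfold, integral_integral_swap (integrable_edgeKernel_mul_inv_sub_prod hr hq)]
    simp only [circleIntegral, intervalIntegral.integral_of_le hpi]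
  rw [hswap]
  simp only [circleIntegral_edgeKernel_mul_inv_sub hr hq]
  rw [integral_indicator measurableSet_Ioo, integral_const_mul, smul_eq_mul,
    inv_mul_cancel_left₀ two_pi_I_ne_zero]

lemma integral_edgeKernel_sub_eq_circleIntegral {σ' : Measure ℝ} [IsFiniteMeasure σ]
    [IsFiniteMeasure σ'] (hr : 0 ≤ r) (hq : Differentiable ℂ q) {F : ℂ → ℂ}
    (hF : DifferentiableOn ℂ F (Metric.closedBall x r)) (c : ℂ) :
    (∫ s in Ioo (x - r) (x + r), edgeKernel x r q (s : ℝ) ∂σ') -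
      c * ∫ s in Ioo (x - r) (x + r), edgeKernel x r q (s : ℝ) ∂σ =
      (2 * Real.pi * I : ℂ)⁻¹ • ∮ w in C(x, r),
        edgeKernel x r q w * (cauchyG σ' w - c * cauchyG σ w - F w) := by
  have hkF := (differentiable_edgeKernel (x := x) (r := r) hq).differentiableOn.mul hF
  have hkF_zero : (∮ w in C(x, r), edgeKernel x r q w * F w) = 0 :=
    (hkF.diffContOnCl_ball Subset.rfl).circleIntegral_eq_zero hr
  have hkF_int : CircleIntegrable (fun w ↦ edgeKernel x r q w * F w) x r :=
    (hkF.continuousOn.mono Metric.sphere_subset_closedBall).circleIntegrable hr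
  have hσ : CircleIntegrable (fun w ↦ c * (edgeKernel x r q w * cauchyG σ w)) x r :=
    (circleIntegrable_edgeKernel_mul_cauchyG hr hq).const_mul c
  have hσ' := circleIntegrable_edgeKernel_mul_cauchyG (x := x) (σ := σ') hr hq
  simp only [mul_sub, mul_left_comm _ c]
  rw [circleIntegral.integral_sub (hσ'.fun_sub hσ) hkF_int,
    circleIntegral.integral_sub hσ' hσ, circleIntegral.integral_const_mul,
    hkF_zero, sub_zero, smul_sub, circleIntegral_edgeKernel_mul_cauchyG hr hq,
    ← mul_smul_comm, circleIntegral_edgeKernel_mul_cauchyG hr hq]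

theorem norm_integral_edgeKernel_sub_le {σ' : Measure ℝ} [IsFiniteMeasure σ] [IsFiniteMeasure σ']
    {B M : ℝ} {c : ℂ} (hr : 0 ≤ r) (hq : Differentiable ℂ q)
    (hB : ∀ w ∈ Metric.sphere (x : ℂ) r, ‖q w‖ ≤ B) {F : ℂ → ℂ}
    (hF : DifferentiableOn ℂ F (Metric.closedBall x r)) (hM : 0 ≤ M)
    (hle : ∀ w ∈ Metric.sphere (x : ℂ) r, w.im ≠ 0 →
      ‖cauchyG σ' w - c * cauchyG σ w - F w‖ ≤ M / |w.im| ^ 3) :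
    ‖(∫ s in Ioo (x - r) (x + r), edgeKernel x r q (s : ℝ) ∂σ') -
      c * ∫ s in Ioo (x - r) (x + r), edgeKernel x r q (s : ℝ) ∂σ‖ ≤ 8 * r ^ 4 * B * M := by
  rw [integral_edgeKernel_sub_eq_circleIntegral hr hq hF]
  refine (circleIntegral.norm_two_pi_i_inv_smul_integral_le_of_norm_le_const hr
    (C := 8 * r ^ 3 * B * M) fun w hw ↦ ?_).trans_eq (by ring)
  have hnorm : ‖w - x‖ = r := mem_sphere_iff_norm.1 hw
  have hB0 : 0 ≤ B := (norm_nonneg _).trans (hB w hw)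
  by_cases him : w.im = 0
  · rw [edgeKernel_eq_zero_of_im_eq_zero hnorm him, zero_mul, norm_zero]
    positivity
  calc ‖edgeKernel x r q w * (cauchyG σ' w - c * cauchyG σ w - F w)‖
      ≤ 8 * r ^ 3 * |w.im| ^ 3 * B * (M / |w.im| ^ 3) := by
        rw [norm_mul, norm_edgeKernel hnorm]
        gcongr
        exacts [hB w hw, hle w hw him]
    _ = 8 * r ^ 3 * B * M := by field_simp [abs_ne_zero.2 him]

lemma integral_edgeKernel_eq_zero_of_cauchyG_eq [IsFiniteMeasure σ] (hr : 0 ≤ r)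
    (hq : Differentiable ℂ q) {F : ℂ → ℂ}
    (hF : DifferentiableOn ℂ F (Metric.closedBall x r))
    (heq : ∀ w ∈ Metric.sphere (x : ℂ) r, w.im ≠ 0 → cauchyG σ w = F w) :
    ∫ s in Ioo (x - r) (x + r), edgeKernel x r q (s : ℝ) ∂σ = 0 := by
  obtain ⟨B, hB⟩ := (isCompact_sphere (x : ℂ) r).exists_bound_of_continuousOn
    hq.continuous.continuousOn
  simpa using norm_integral_edgeKernel_sub_le (σ := 0) (σ' := σ) (c := 0) hr hq hB hF le_rfl
    fun w hw him ↦ by simp [heq w hw him]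

lemma measure_Ioo_eq_zero_of_cauchyG_eq [IsFiniteMeasure σ] (hr : 0 ≤ r) {F : ℂ → ℂ}
    (hF : DifferentiableOn ℂ F (Metric.closedBall x r))
    (heq : ∀ w ∈ Metric.sphere (x : ℂ) r, w.im ≠ 0 → cauchyG σ w = F w) :
    σ (Ioo (x - r) (x + r)) = 0 := by
  set f : ℝ → ℝ := fun s ↦ (r ^ 2 - (s - x) ^ 2) ^ 3
  have hintegral : ∫ s in Ioo (x - r) (x + r), f s ∂σ = 0 := by
    have hf (s : ℝ) : edgeKernel x r (fun _ ↦ -1) s = (f s : ℂ) := by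
      simp only [edgeKernel, f]; push_cast; ring
    have := integral_edgeKernel_eq_zero_of_cauchyG_eq hr (differentiable_const (-1)) hF heq
    simp only [hf, integral_complex_ofReal] at this
    exact_mod_cast this
  have hpos : ∀ s ∈ Ioo (x - r) (x + r), 0 < f s := fun s hs ↦
    pow_pos (by nlinarith [hs.1, hs.2]) 3
  have h_int : IntegrableOn f (Ioo (x - r) (x + r)) σ :=
    (Continuous.integrableOn_Icc (by fun_prop)).mono_set Ioo_subset_Icc_self
  have hzero := (setIntegral_eq_zero_iff_of_nonneg_ae
    (ae_restrict_of_forall_mem measurableSet_Ioo fun s hs ↦ (hpos s hs).le) h_int).1 hintegral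
  rw [← Measure.restrict_apply_self]
  refine measure_mono_null (fun s hs ↦ ?_) hzero
  exact (hpos s hs).ne'

end EdgeKernel

section BooleanPower

lemma ae_nonneg_iff_measure_Iio_eq_zero {τ : Measure ℝ} :
    (∀ᵐ s ∂τ, 0 ≤ s) ↔ τ (Iio 0) = 0 := by
  simp only [ae_iff, not_le, Iio_def]

/-- `ρ` is the Boolean convolution power `μ^{⊎c}` of real exponent `c`, characterised by its
K-transform. -/
def IsBooleanPower (c : ℝ) (μ ρ : Measure ℝ) : Prop :=
  ∀ z : ℂ, 0 < z.im → Ktrans ρ z = c * Ktrans μ z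

variable {c : ℝ} {μ ρ : Measure ℝ} {z : ℂ}

lemma IsBooleanPower.cauchyG_mul_eq [IsProbabilityMeasure μ] [IsProbabilityMeasure ρ]
    (h : IsBooleanPower c μ ρ) (hz : z.im ≠ 0) :
    cauchyG ρ z * (c + (1 - c) * (z * cauchyG μ z)) = cauchyG μ z := by
  have hupper (z : ℂ) (hz : 0 < z.im) :
      cauchyG ρ z * (c + (1 - c) * (z * cauchyG μ z)) = cauchyG μ z := by
    have hK := h z hz
    have hGμ := cauchyG_ne_zero (σ := μ) hz.ne'
    have hGρ := cauchyG_ne_zero (σ := ρ) hz.ne'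
    rw [Ktrans, Ktrans] at hK
    field_simp at hK
    linear_combination hK
  rcases hz.lt_or_gt with hz | hz
  · have := congrArg conj (hupper (conj z) (by simpa using hz))
    simpa [cauchyG_conj] using this
  · exact hupper z hz

lemma neg_re_le_norm_sub_ofReal {s : ℝ} (hs : 0 ≤ s) : -z.re ≤ ‖z - s‖ := by
  have := (neg_le_abs _).trans (abs_re_le_norm (z - s))
  simp only [sub_re, ofReal_re] at this
  linarith

lemma re_mul_inv_sub_ofReal_mem_Icc (hz : z.re < 0) {s : ℝ} (hs : 0 ≤ s) :
    (z * (z - s)⁻¹).re ∈ Icc 0 1 := by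
  have hne : 0 < normSq (z - s) := normSq_pos.2 <| norm_pos_iff.1 <|
    (neg_pos.2 hz).trans_le (neg_re_le_norm_sub_ofReal hs)
  have hre : (z * (z - s)⁻¹).re = (z.re ^ 2 + z.im ^ 2 - z.re * s) / normSq (z - s) := by
    simp only [mul_re, inv_re, inv_im, sub_re, sub_im, ofReal_re, ofReal_im]
    ring
  rw [hre, mem_Icc, le_div_iff₀ hne, div_le_one hne, normSq_apply]
  simp only [sub_re, sub_im, ofReal_re, ofReal_im]
  constructor <;> nlinarith [mul_nonneg (neg_nonneg.2 hz.le) hs, sq_nonneg z.re, sq_nonneg z.im]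

lemma re_mul_cauchyG_mem_Icc [IsProbabilityMeasure μ] (hμ : ∀ᵐ s ∂μ, 0 ≤ s) (hz : z.re < 0) :
    (z * cauchyG μ z).re ∈ Icc 0 1 := by
  have h_int : Integrable (fun s : ℝ ↦ z * (z - s)⁻¹) μ :=
    (integrable_inv_sub_of_le_norm_sub (neg_pos.2 hz)
      (hμ.mono fun _ ↦ neg_re_le_norm_sub_ofReal)).const_mul z
  have hre : (z * cauchyG μ z).re = ∫ s : ℝ, (z * (z - s)⁻¹).re ∂μ := by
    rw [cauchyG, ← integral_const_mul]
    exact (integral_re h_int).symm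
  rw [hre]
  exact (convex_Icc 0 1).integral_mem isClosed_Icc
    (hμ.mono fun _ ↦ re_mul_inv_sub_ofReal_mem_Icc hz) h_int.re

lemma boolean_denominator_ne_zero {u : ℂ} (hc : 0 < c) (hu : u.re ∈ Icc 0 1) :
    c + (1 - c) * u ≠ 0 := by
  intro h
  have := congrArg re h
  simp at this
  nlinarith [hu.1, hu.2, mul_nonneg hc.le (sub_nonneg.2 hu.2)]

theorem IsBooleanPower.ae_nonneg [IsProbabilityMeasure μ] [IsProbabilityMeasure ρ]
    (h : IsBooleanPower c μ ρ) (hc : 0 < c) (hμ : ∀ᵐ s ∂μ, 0 ≤ s) : ∀ᵐ s ∂ρ, 0 ≤ s := by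
  have hden (z : ℂ) (hz : z.re < 0) : c + (1 - c) * (z * cauchyG μ z) ≠ 0 :=
    boolean_denominator_ne_zero hc (re_mul_cauchyG_mem_Icc hμ hz)
  have hdiff (z : ℂ) (hz : z.re < 0) :
      DifferentiableAt ℂ (fun z ↦ cauchyG μ z / (c + (1 - c) * (z * cauchyG μ z))) z := by
    have hG : DifferentiableAt ℂ (cauchyG μ) z :=
      differentiableAt_cauchyG (neg_pos.2 hz) (hμ.mono fun _ ↦ neg_re_le_norm_sub_ofReal)
    have := hden z hz
    fun_prop (disch := assumption)
  suffices hnull : ρ (Iio 0) = 0 from ae_nonneg_iff_measure_Iio_eq_zero.2 hnull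
  refine measure_null_of_locally_null _ fun x (hx : x < 0) ↦
    ⟨Ioo (x - -x / 2) (x + -x / 2), mem_nhdsWithin_of_mem_nhds
      (Ioo_mem_nhds (by linarith) (by linarith)), ?_⟩
  have hball : ∀ w ∈ Metric.closedBall (x : ℂ) (-x / 2), w.re < 0 := fun w hw ↦ by
    have := (re_le_norm _).trans (mem_closedBall_iff_norm.1 hw)
    simp only [sub_re, ofReal_re] at this
    linarith
  refine measure_Ioo_eq_zero_of_cauchyG_eq (by linarith)
    (fun w hw ↦ (hdiff w (hball w hw)).differentiableWithinAt) ?_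
  exact fun w hw him ↦ eq_div_of_mul_eq
    (hden w (hball w (Metric.sphere_subset_closedBall hw))) (h.cauchyG_mul_eq him)

end BooleanPower

section Inversion

/-- The image of `τ` restricted to `ℝ \ {0}` under `t ↦ y / t`. It turns the tail of `τ` beyond
`y / u` into the mass of the bounded interval `(0, u)`. -/
def invScale (τ : Measure ℝ) (y : ℝ) : Measure ℝ := (τ.restrict {0}ᶜ).map (fun t ↦ y / t)

variable {τ : Measure ℝ} {y : ℝ} {w : ℂ}

instance [IsFiniteMeasure τ] : IsFiniteMeasure (invScale τ y) := by
  unfold invScale; infer_instance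

lemma invScale_apply {A : Set ℝ} (hA : MeasurableSet A) :
    invScale τ y A = τ ((fun t ↦ y / t) ⁻¹' A ∩ {0}ᶜ) := by
  have hmeas : Measurable fun t : ℝ ↦ y / t := by fun_prop
  rw [invScale, Measure.map_apply hmeas hA, Measure.restrict_apply (hmeas hA)]

lemma invScale_Ioo {u : ℝ} (hy : 0 < y) (hu : 0 < u) :
    invScale τ y (Ioo 0 u) = τ (Ioi (y / u)) := by
  rw [invScale_apply measurableSet_Ioo]
  congr 1
  ext t
  simp only [mem_inter_iff, mem_preimage, mem_Ioo, mem_compl_iff, mem_singleton_iff, mem_Ioi,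
    div_pos_iff_of_pos_left hy]
  constructor
  · rintro ⟨⟨ht, hlt⟩, -⟩
    rwa [div_lt_comm₀ hu ht]
  · intro hlt
    have ht : 0 < t := (div_pos hy hu).trans hlt
    exact ⟨⟨ht, by rwa [div_lt_comm₀ ht hu]⟩, ht.ne'⟩

lemma invScale_real_Ioo {u : ℝ} (hy : 0 < y) (hu : 0 < u) :
    (invScale τ y).real (Ioo 0 u) = τ.real (Ioi (y / u)) := by
  rw [measureReal_def, invScale_Ioo hy hu, measureReal_def]

lemma ae_pos_invScale (hy : 0 < y) (hτ : ∀ᵐ t ∂τ, 0 ≤ t) : ∀ᵐ s ∂invScale τ y, 0 < s := by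
  refine (ae_map_iff (Measurable.aemeasurable (by fun_prop)) measurableSet_Ioi).2 ?_
  filter_upwards [ae_restrict_of_ae hτ, ae_restrict_mem (measurableSet_singleton 0).compl]
    with t ht ht0
  exact div_pos hy (ht.lt_of_ne' ht0)

lemma invScale_real_Iio {u : ℝ} (hy : 0 < y) (hu : 0 < u) (hτ : ∀ᵐ t ∂τ, 0 ≤ t) :
    (invScale τ y).real (Iio u) = τ.real (Ioi (y / u)) := by
  rw [← invScale_real_Ioo hy hu]
  refine measureReal_congr ?_
  filter_upwards [ae_pos_invScale hy hτ] with s hs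
  exact propext ⟨fun h ↦ ⟨hs, h⟩, fun h ↦ h.2⟩

lemma invScale_real_univ_le [IsProbabilityMeasure τ] : (invScale τ y).real univ ≤ 1 := by
  rw [measureReal_def, invScale_apply MeasurableSet.univ]
  exact measureReal_le_one

lemma inv_div_sub_eq (hy : y ≠ 0) (hw : w.im ≠ 0) (t : ℝ) :
    ((y : ℂ) / w - t)⁻¹ =
      w / y * (1 - w * ({0}ᶜ : Set ℝ).indicator (fun t : ℝ ↦ (w - (y / t : ℝ))⁻¹) t) := by
  rcases eq_or_ne t 0 with rfl | ht
  · simp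
  have hw0 : w ≠ 0 := by rintro rfl; simp at hw
  have hyc : (y : ℂ) ≠ 0 := ofReal_ne_zero.2 hy
  have htc : (t : ℂ) ≠ 0 := ofReal_ne_zero.2 ht
  have hne : (y : ℂ) - w * t ≠ 0 := fun h ↦ by simpa [ht, hw] using congrArg im h
  have hne' : w * t - (y : ℂ) ≠ 0 := by rwa [← neg_ne_zero, neg_sub]
  rw [indicator_of_mem (by simpa using ht)]
  push_cast
  field_simp
  ring

lemma cauchyG_div [IsProbabilityMeasure τ] (hy : y ≠ 0) (hw : w.im ≠ 0) :
    cauchyG τ (y / w) = w / y * (1 - w * cauchyG (invScale τ y) w) := by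
  have hmap : cauchyG (invScale τ y) w =
      ∫ t, ({0}ᶜ : Set ℝ).indicator (fun t : ℝ ↦ (w - (y / t : ℝ))⁻¹) t ∂τ := by
    rw [cauchyG, invScale, integral_map (Measurable.aemeasurable (by fun_prop))
      (Measurable.aestronglyMeasurable (by fun_prop)),
      integral_indicator (measurableSet_singleton 0).compl]
  have h_int : Integrable (({0}ᶜ : Set ℝ).indicator (fun t : ℝ ↦ (w - (y / t : ℝ))⁻¹)) τ :=
    (Integrable.of_bound (Measurable.aestronglyMeasurable (by fun_prop)) |w.im|⁻¹
      (ae_of_all _ fun t ↦ norm_inv_sub_ofReal_le hw _)).indicator (measurableSet_singleton 0).compl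
  simp only [cauchyG, inv_div_sub_eq hy hw] at hmap ⊢
  rw [integral_const_mul, integral_sub (integrable_const _) (h_int.const_mul w),
    integral_const_mul, hmap]
  simp

lemma IsBooleanPower.cauchyG_invScale [IsProbabilityMeasure τ] {c : ℝ} {ρ : Measure ℝ}
    [IsProbabilityMeasure ρ] (h : IsBooleanPower c τ ρ) (hy : y ≠ 0) (hw : w.im ≠ 0) :
    cauchyG (invScale ρ y) w * (1 - (1 - c) * w * cauchyG (invScale τ y) w) =
      c * cauchyG (invScale τ y) w := by
  have hw0 : w ≠ 0 := by rintro rfl; simp at hw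
  have hyc : (y : ℂ) ≠ 0 := ofReal_ne_zero.2 hy
  have him : ((y : ℂ) / w).im ≠ 0 := by simp [div_im, hy, hw, hw0]
  have hrel := h.cauchyG_mul_eq him
  rw [cauchyG_div hy hw, cauchyG_div hy hw] at hrel
  field_simp at hrel
  refine mul_left_cancel₀ hw0 ?_
  linear_combination -hrel

lemma tendsto_setIntegral_Ici_inv_invScale [IsFiniteMeasure τ] {a : ℝ} (ha : 0 < a) :
    Tendsto (fun y ↦ ∫ s in Ici a, s⁻¹ ∂invScale τ y) atTop (𝓝 0) := by
  set g : ℝ → ℝ := (Ici a).indicator (·⁻¹)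
  have hg : Measurable g := measurable_inv.indicator measurableSet_Ici
  have hg_bound (s : ℝ) : ‖g s‖ ≤ a⁻¹ := by
    rw [norm_indicator_eq_indicator_norm]
    refine indicator_apply_le' (fun hs ↦ ?_) fun _ ↦ (inv_pos.2 ha).le
    rw [norm_inv]
    exact inv_anti₀ ha (le_trans hs (le_abs_self s))
  have hg_lim (t : ℝ) : Tendsto (fun y ↦ g (y / t)) atTop (𝓝 0) := by
    have hdiv : Tendsto (fun y : ℝ ↦ ‖t / y‖) atTop (𝓝 0) := by
      have : Tendsto (fun y : ℝ ↦ t / y) atTop (𝓝 0) := tendsto_const_nhds.div_atTop tendsto_id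
      simpa using this.norm
    refine squeeze_zero_norm (fun y ↦ ?_) hdiv
    exact (norm_indicator_le_norm_self _ _).trans_eq (by rw [inv_div])
  have hmap (y : ℝ) : ∫ s in Ici a, s⁻¹ ∂invScale τ y = ∫ t in {0}ᶜ, g (y / t) ∂τ := by
    rw [← integral_indicator measurableSet_Ici, invScale,
      integral_map (Measurable.aemeasurable (by fun_prop)) hg.aestronglyMeasurable]
  simp only [hmap]
  simpa using tendsto_integral_filter_of_dominated_convergence
    (F := fun y t ↦ g (y / t)) (f := fun _ ↦ (0 : ℝ)) (fun _ ↦ a⁻¹)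
    (Eventually.of_forall fun y ↦ (hg.comp (by fun_prop)).aestronglyMeasurable)
    (Eventually.of_forall fun y ↦ ae_of_all (τ.restrict {0}ᶜ) fun t ↦ hg_bound _)
    (integrable_const _) (ae_of_all _ hg_lim)

end Inversion

section ContourEstimate

section Moebius

variable {𝕜 : Type*} [NormedField 𝕜] {a b x x₁ x' : 𝕜}

lemma moebius_remainder_eq (hrel : x' * (1 - a * x) = b * x) (hD : 1 - a * x₁ ≠ 0) :
    x' - b * x - (b * x₁ / (1 - a * x₁) - b * x₁) =
      a * (x - x₁) * (x' + b * x₁) * (1 - a * x₁)⁻¹ := by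
  rw [← div_eq_mul_inv, eq_div_iff hD]
  linear_combination hrel - div_mul_cancel₀ (b * x₁) hD

lemma half_le_norm_one_sub {u : 𝕜} (hu : ‖u‖ ≤ 1 / 2) : 1 / 2 ≤ ‖1 - u‖ := by
  have := norm_sub_norm_le 1 u
  rw [norm_one] at this
  linarith

lemma norm_moebius_remainder_le {L ε δ v : ℝ} (ha : ‖a‖ ≤ L) (hb : ‖b‖ ≤ L)
    (hrel : x' * (1 - a * x) = b * x) (hx₁ : ‖x₁‖ ≤ ε) (hLε : L * ε ≤ 1 / 2)
    (hx : ‖x - x₁‖ ≤ δ / v) (hx' : ‖x'‖ ≤ 1 / v) (hv : 0 < v) (hv1 : v ≤ 1) :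
    ‖x' - b * x - (b * x₁ / (1 - a * x₁) - b * x₁)‖ ≤ 8 * L ^ 2 * δ * (ε + δ) / v ^ 3 := by
  have hδ : 0 ≤ δ := by
    have := (norm_nonneg _).trans hx
    rwa [le_div_iff₀ hv, zero_mul] at this
  have hD_half : 1 / 2 ≤ ‖1 - a * x₁‖ :=
    half_le_norm_one_sub ((norm_mul_le_of_le ha hx₁).trans hLε)
  have hD : 1 - a * x₁ ≠ 0 := norm_pos_iff.1 (by linarith)
  have hDinv : ‖(1 - a * x₁)⁻¹‖ ≤ 2 := by
    rw [norm_inv]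
    exact inv_le_of_inv_le₀ two_pos (by linarith)
  have hx'_eq : x' = (b * x₁ + (x - x₁) * (b + a * x')) * (1 - a * x₁)⁻¹ := by
    rw [← div_eq_mul_inv, eq_div_iff hD]
    linear_combination hrel
  have hx'_le : ‖x'‖ ≤ (L * ε + δ / v * (L + L * (1 / v))) * 2 := by
    conv_lhs => rw [hx'_eq]
    exact norm_mul_le_of_le (norm_add_le_of_le (norm_mul_le_of_le hb hx₁)
      (norm_mul_le_of_le hx (norm_add_le_of_le hb (norm_mul_le_of_le ha hx')))) hDinv
  calc ‖x' - b * x - (b * x₁ / (1 - a * x₁) - b * x₁)‖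
      ≤ L * (δ / v) * ((L * ε + δ / v * (L + L * (1 / v))) * 2 + L * ε) * 2 := by
        rw [moebius_remainder_eq hrel hD]
        exact norm_mul_le_of_le (norm_mul_le_of_le (norm_mul_le_of_le ha hx)
          (norm_add_le_of_le hx'_le (norm_mul_le_of_le hb hx₁))) hDinv
    _ = L ^ 2 * δ * (6 * (ε * v ^ 2) + 4 * (δ * v) + 4 * δ) / v ^ 3 := by field_simp; ring
    _ ≤ L ^ 2 * δ * (8 * (ε + δ)) / v ^ 3 := by
        have hε : 0 ≤ ε := (norm_nonneg x₁).trans hx₁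
        have hεv : ε * v ^ 2 ≤ ε := mul_le_of_le_one_right hε (pow_le_one₀ hv.le hv1)
        have hδv : δ * v ≤ δ := mul_le_of_le_one_right hδ hv1
        gcongr
        linarith
    _ = 8 * L ^ 2 * δ * (ε + δ) / v ^ 3 := by ring

end Moebius

variable {σ : Measure ℝ} {w : ℂ}

lemma half_le_norm_sub_ofReal (hw : ‖w‖ ≤ 1) {s : ℝ} (hs : 2 ≤ s) : s / 2 ≤ ‖w - s‖ := by
  have := norm_sub_norm_le (s : ℂ) w
  rw [norm_real, Real.norm_of_nonneg (by linarith), norm_sub_rev] at this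
  linarith

lemma norm_cauchyG_restrict_Ici_two_le [IsFiniteMeasure σ] (hw : ‖w‖ ≤ 1) :
    ‖cauchyG (σ.restrict (Ici 2)) w‖ ≤ 2 * ∫ s in Ici 2, s⁻¹ ∂σ := by
  rw [cauchyG, ← integral_const_mul]
  have hmem := ae_restrict_mem (μ := σ) (measurableSet_Ici (a := (2 : ℝ)))
  refine norm_integral_le_of_norm_le ?_ ?_
  · refine Integrable.const_mul (Integrable.of_bound (by fun_prop) 2⁻¹ ?_) 2
    filter_upwards [hmem] with s (hs : 2 ≤ s)
    rw [norm_inv, Real.norm_of_nonneg (by linarith)]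
    exact inv_anti₀ two_pos hs
  · filter_upwards [hmem] with s (hs : 2 ≤ s)
    rw [norm_inv, ← div_eq_mul_inv, ← inv_div]
    exact inv_anti₀ (by linarith) (half_le_norm_sub_ofReal hw hs)

lemma differentiableAt_cauchyG_restrict_Ici_two [IsFiniteMeasure σ] (hw : ‖w‖ ≤ 1) :
    DifferentiableAt ℂ (cauchyG (σ.restrict (Ici 2))) w := by
  refine differentiableAt_cauchyG one_pos ?_
  filter_upwards [ae_restrict_mem measurableSet_Ici] with s (hs : 2 ≤ s)
  linarith [half_le_norm_sub_ofReal hw hs]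

lemma norm_cauchyG_sub_restrict_Ici_le [IsFiniteMeasure σ] (a : ℝ) (hw : w.im ≠ 0) :
    ‖cauchyG σ w - cauchyG (σ.restrict (Ici a)) w‖ ≤ σ.real (Iio a) / |w.im| := by
  have hsplit : cauchyG σ w - cauchyG (σ.restrict (Ici a)) w =
      cauchyG (σ.restrict (Iio a)) w := by
    rw [sub_eq_iff_eq_add', ← compl_Ici]
    exact (integral_add_compl measurableSet_Ici (integrable_inv_sub_of_im_ne_zero hw)).symm
  rw [hsplit, ← measureReal_restrict_apply_univ]
  exact norm_cauchyG_le hw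

/-- The part of the Möbius transform of `cauchyG σ` that the far mass of `σ` contributes beyond the
linear term; it is holomorphic on the unit disc. -/
def farCorrection (c : ℝ) (σ : Measure ℝ) (w : ℂ) : ℂ :=
  c * cauchyG (σ.restrict (Ici 2)) w / (1 - (1 - c) * w * cauchyG (σ.restrict (Ici 2)) w) -
    c * cauchyG (σ.restrict (Ici 2)) w

variable {σ' : Measure ℝ} {c ε : ℝ}

lemma norm_one_sub_mul_le (hc : 0 ≤ c) (hw : ‖w‖ ≤ 1) : ‖(1 - c) * w‖ ≤ c + 1 := by
  have h1c : ‖(1 : ℂ) - c‖ ≤ c + 1 := by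
    simpa [abs_of_nonneg hc, add_comm] using norm_sub_le (1 : ℂ) c
  simpa using norm_mul_le_of_le h1c hw

lemma differentiableAt_farCorrection [IsFiniteMeasure σ] (hc : 0 ≤ c)
    (hε : (c + 1) * (2 * ∫ s in Ici 2, s⁻¹ ∂σ) ≤ 1 / 2) (hw : ‖w‖ ≤ 1) :
    DifferentiableAt ℂ (farCorrection c σ) w := by
  have hG := differentiableAt_cauchyG_restrict_Ici_two (σ := σ) hw
  have hne : 1 - (1 - c) * w * cauchyG (σ.restrict (Ici 2)) w ≠ 0 := by
    have := half_le_norm_one_sub <| (norm_mul_le_of_le (norm_one_sub_mul_le hc hw)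
      (norm_cauchyG_restrict_Ici_two_le (σ := σ) hw)).trans hε
    exact norm_pos_iff.1 (by linarith)
  unfold farCorrection
  fun_prop (disch := assumption)

lemma norm_cauchyG_sub_sub_farCorrection_le [IsFiniteMeasure σ] [IsFiniteMeasure σ'] {δ : ℝ}
    (hc : 0 ≤ c) (hmass : σ'.real univ ≤ 1) (hε : 2 * ∫ s in Ici 2, s⁻¹ ∂σ ≤ ε)
    (hcε : (c + 1) * ε ≤ 1 / 2) (hδ : σ.real (Iio 2) ≤ δ) (hw : ‖w‖ = 1) (him : w.im ≠ 0)
    (hrel : cauchyG σ' w * (1 - (1 - c) * w * cauchyG σ w) = c * cauchyG σ w) :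
    ‖cauchyG σ' w - c * cauchyG σ w - farCorrection c σ w‖ ≤
      8 * (c + 1) ^ 2 * δ * (ε + δ) / |w.im| ^ 3 := by
  have hc_norm : ‖(c : ℂ)‖ ≤ c + 1 := by
    rw [norm_real, Real.norm_of_nonneg hc]
    linarith
  exact norm_moebius_remainder_le (norm_one_sub_mul_le hc hw.le) hc_norm hrel
    ((norm_cauchyG_restrict_Ici_two_le hw.le).trans hε) hcε
    ((norm_cauchyG_sub_restrict_Ici_le 2 him).trans (by gcongr))
    ((norm_cauchyG_le him).trans (by gcongr)) (abs_pos.2 him) (hw ▸ abs_im_le_norm w)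

theorem norm_integral_edgeKernel_sub_le_of_moebius [IsFiniteMeasure σ] [IsFiniteMeasure σ']
    {δ B : ℝ} {q : ℂ → ℂ} (hq : Differentiable ℂ q)
    (hB : ∀ w ∈ Metric.sphere (0 : ℂ) 1, ‖q w‖ ≤ B)
    (hc : 0 ≤ c) (hmass : σ'.real univ ≤ 1) (hε : 2 * ∫ s in Ici 2, s⁻¹ ∂σ ≤ ε)
    (hcε : (c + 1) * ε ≤ 1 / 2) (hδ : σ.real (Iio 2) ≤ δ)
    (hrel : ∀ w : ℂ, w.im ≠ 0 →
      cauchyG σ' w * (1 - (1 - c) * w * cauchyG σ w) = c * cauchyG σ w) :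
    ‖(∫ s in Ioo (-1) 1, edgeKernel 0 1 q (s : ℝ) ∂σ') -
      c * ∫ s in Ioo (-1) 1, edgeKernel 0 1 q (s : ℝ) ∂σ‖ ≤
      64 * B * (c + 1) ^ 2 * (δ * (ε + δ)) := by
  have hF : DifferentiableOn ℂ (farCorrection c σ) (Metric.closedBall (0 : ℝ) 1) := fun w hw ↦
    (differentiableAt_farCorrection hc (le_trans (by gcongr) hcε)
      (by simpa using hw)).differentiableWithinAt
  have hε0 : 0 ≤ ε := by
    refine le_trans (mul_nonneg zero_le_two (setIntegral_nonneg measurableSet_Ici ?_)) hε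
    exact fun s (hs : 2 ≤ s) ↦ inv_nonneg.2 (zero_le_two.trans hs)
  have hδ0 : 0 ≤ δ := measureReal_nonneg.trans hδ
  have := norm_integral_edgeKernel_sub_le (x := 0) (r := 1) (σ := σ) (σ' := σ') (c := c)
    (M := 8 * (c + 1) ^ 2 * δ * (ε + δ)) zero_le_one hq (by simpa using hB) hF (by positivity)
    fun w hw him ↦ norm_cauchyG_sub_sub_farCorrection_le hc hmass hε hcε hδ (by simpa using hw)
      him (hrel w him)
  rw [zero_sub, zero_add] at this
  exact this.trans_eq (by ring)

end ContourEstimate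

section TailAsymptotics

variable {μ ρ : Measure ℝ} {α c : ℝ}

lemma RegVarTail.real_Ioi_pos [IsFiniteMeasure μ] (h : RegVarTail μ α) {x : ℝ} (hx : 0 ≤ x) :
    0 < μ.real (Ioi x) :=
  ENNReal.toReal_pos (h.1 x hx).ne' (measure_ne_top _ _)

lemma RegVarTail.tendsto_div (h : RegVarTail μ α) {t : ℝ} (ht : 0 < t) :
    Tendsto (fun y ↦ μ.real (Ioi (t * y)) / μ.real (Ioi y)) atTop (𝓝 (t ^ (-α))) :=
  h.2 t ht

lemma RegVarTail.isBigO_comp_mul [IsFiniteMeasure μ] (h : RegVarTail μ α) {t : ℝ} (ht : 0 < t) :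
    (fun y ↦ μ.real (Ioi (t * y))) =O[atTop] fun y ↦ μ.real (Ioi y) := by
  refine isBigO_of_div_tendsto_nhds ?_ _ (h.tendsto_div ht)
  filter_upwards [eventually_ge_atTop 0] with y hy hzero
  exact absurd hzero (h.real_Ioi_pos hy).ne'

lemma RegVarTail.isLittleO_comp_mul [IsFiniteMeasure μ] (h : RegVarTail μ α) {e : ℝ → ℝ}
    (he : e =o[atTop] fun y ↦ μ.real (Ioi y)) {t : ℝ} (ht : 0 < t) :
    (fun y ↦ e (t * y)) =o[atTop] fun y ↦ μ.real (Ioi y) :=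
  (he.comp_tendsto (tendsto_id.const_mul_atTop ht)).trans_isBigO (h.isBigO_comp_mul ht)

lemma tendsto_real_Ioi_atTop [IsProbabilityMeasure μ] :
    Tendsto (fun y ↦ μ.real (Ioi y)) atTop (𝓝 0) := by
  have htail (y : ℝ) : μ.real (Ioi y) = 1 - ProbabilityTheory.cdf μ y := by
    rw [ProbabilityTheory.cdf_eq_real, ← compl_Iic, probReal_compl_eq_one_sub measurableSet_Iic]
  simpa [htail] using (ProbabilityTheory.tendsto_cdf_atTop μ).const_sub 1

/-- The amount by which `invScale ρ y` differs from `c • invScale μ y` on the interval `(0, 1)`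
when tested against `f`. -/
def tailDefect (c : ℝ) (μ ρ : Measure ℝ) (f : ℝ → ℝ) (y : ℝ) : ℝ :=
  (∫ s in Ioo 0 1, f s ∂invScale ρ y) - c * ∫ s in Ioo 0 1, f s ∂invScale μ y

lemma tailDefect_congr {f g : ℝ → ℝ} (h : EqOn f g (Ioo 0 1)) :
    tailDefect c μ ρ f = tailDefect c μ ρ g := by
  funext y
  simp only [tailDefect, setIntegral_congr_fun measurableSet_Ioo h]

lemma integrableOn_Ioo_of_continuousOn_Icc {σ : Measure ℝ} [IsFiniteMeasure σ] {f : ℝ → ℝ}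
    {a b : ℝ} (hf : ContinuousOn f (Icc a b)) : IntegrableOn f (Ioo a b) σ :=
  hf.integrableOn_Icc.mono_set Ioo_subset_Icc_self

lemma tailDefect_sub [IsFiniteMeasure μ] [IsFiniteMeasure ρ] {f g : ℝ → ℝ}
    (hf : ContinuousOn f (Icc 0 1)) (hg : ContinuousOn g (Icc 0 1)) (y : ℝ) :
    tailDefect c μ ρ (fun s ↦ f s - g s) y = tailDefect c μ ρ f y - tailDefect c μ ρ g y := by
  simp only [tailDefect]
  rw [integral_sub (integrableOn_Ioo_of_continuousOn_Icc hf)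
      (integrableOn_Ioo_of_continuousOn_Icc hg),
    integral_sub (integrableOn_Ioo_of_continuousOn_Icc hf)
      (integrableOn_Ioo_of_continuousOn_Icc hg)]
  ring

lemma norm_tailDefect_le [IsFiniteMeasure μ] [IsFiniteMeasure ρ] {f : ℝ → ℝ} {η y : ℝ}
    (hf : ∀ s ∈ Ioo 0 1, ‖f s‖ ≤ η) (hc : 0 ≤ c) (hy : 0 < y) :
    ‖tailDefect c μ ρ f y‖ ≤ η * (ρ.real (Ioi y) + c * μ.real (Ioi y)) := by
  have hle (τ : Measure ℝ) [IsFiniteMeasure τ] :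
      ‖∫ s in Ioo 0 1, f s ∂invScale τ y‖ ≤ η * τ.real (Ioi y) := by
    have := norm_setIntegral_le_of_norm_le_const (measure_lt_top (invScale τ y) _) hf
    rwa [invScale_real_Ioo hy one_pos, div_one] at this
  calc ‖tailDefect c μ ρ f y‖ ≤ η * ρ.real (Ioi y) + c * (η * μ.real (Ioi y)) :=
        norm_sub_le_of_le (hle ρ) (norm_mul_le_of_le (Real.norm_of_nonneg hc).le (hle μ))
    _ = η * (ρ.real (Ioi y) + c * μ.real (Ioi y)) := by ring

lemma setIntegral_edgeKernel_aeval {σ : Measure ℝ} (hσ : ∀ᵐ s ∂σ, 0 < s) (p : ℝ[X]) :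
    ∫ s in Ioo (-1) 1, edgeKernel 0 1 (fun w ↦ aeval w p) (s : ℝ) ∂σ =
      (∫ s in Ioo 0 1, (s ^ 2 - 1) ^ 3 * p.eval s ∂σ : ℝ) := by
  have hset : (Ioo (-1) 1 : Set ℝ) =ᵐ[σ] Ioo 0 1 := by
    filter_upwards [hσ] with s hs
    exact propext ⟨fun h ↦ ⟨hs, h.2⟩, fun h ↦ ⟨by linarith, h.2⟩⟩
  have heval (s : ℝ) : aeval (s : ℂ) p = ((p.eval s : ℝ) : ℂ) :=
    aeval_algebraMap_apply_eq_algebraMap_eval s p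
  rw [setIntegral_congr_set hset, ← integral_complex_ofReal]
  simp [edgeKernel, heval]

lemma IsBooleanPower.norm_tailDefect_polynomial_le [IsProbabilityMeasure μ]
    [IsProbabilityMeasure ρ] (h : IsBooleanPower c μ ρ) (hc : 0 < c) (hμ : ∀ᵐ s ∂μ, 0 ≤ s)
    {p : ℝ[X]} {B : ℝ} (hB : ∀ w ∈ Metric.sphere (0 : ℂ) 1, ‖aeval w p‖ ≤ B) {y : ℝ} (hy : 0 < y)
    (hfar : (c + 1) * (2 * ∫ s in Ici 2, s⁻¹ ∂invScale μ y) ≤ 1 / 2) :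
    ‖tailDefect c μ ρ (fun s ↦ (s ^ 2 - 1) ^ 3 * p.eval s) y‖ ≤
      64 * B * (c + 1) ^ 2 * (μ.real (Ioi (2⁻¹ * y)) *
        (2 * (∫ s in Ici 2, s⁻¹ ∂invScale μ y) + μ.real (Ioi (2⁻¹ * y)))) := by
  have hδ : (invScale μ y).real (Iio 2) ≤ μ.real (Ioi (2⁻¹ * y)) := by
    rw [invScale_real_Iio hy two_pos hμ, div_eq_inv_mul]
  have := norm_integral_edgeKernel_sub_le_of_moebius (p.differentiable_aeval (𝕜 := ℂ)) hB hc.le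
    (invScale_real_univ_le (τ := ρ)) le_rfl hfar hδ fun w hw ↦ h.cauchyG_invScale hy.ne' hw
  rw [setIntegral_edgeKernel_aeval (ae_pos_invScale hy (h.ae_nonneg hc hμ)),
    setIntegral_edgeKernel_aeval (ae_pos_invScale hy hμ)] at this
  rw [tailDefect, ← norm_real]
  push_cast at this ⊢
  exact this

lemma IsBooleanPower.isLittleO_tailDefect_polynomial [IsProbabilityMeasure μ]
    [IsProbabilityMeasure ρ] (h : IsBooleanPower c μ ρ) (hc : 0 < c) (hμ : ∀ᵐ s ∂μ, 0 ≤ s)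
    (hreg : RegVarTail μ α) (p : ℝ[X]) :
    tailDefect c μ ρ (fun s ↦ (s ^ 2 - 1) ^ 3 * p.eval s) =o[atTop] fun y ↦ μ.real (Ioi y) := by
  obtain ⟨B, hB⟩ := (isCompact_sphere (0 : ℂ) 1).exists_bound_of_continuousOn
    (p.continuous_aeval (A := ℂ)).continuousOn
  set δ : ℝ → ℝ := fun y ↦ μ.real (Ioi (2⁻¹ * y))
  set ε : ℝ → ℝ := fun y ↦ 2 * ∫ s in Ici 2, s⁻¹ ∂invScale μ y
  have hε : Tendsto ε atTop (𝓝 0) := by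
    simpa using (tendsto_setIntegral_Ici_inv_invScale two_pos).const_mul 2
  have hδ : Tendsto δ atTop (𝓝 0) :=
    tendsto_real_Ioi_atTop.comp (tendsto_id.const_mul_atTop (by norm_num))
  have hbound : tailDefect c μ ρ (fun s ↦ (s ^ 2 - 1) ^ 3 * p.eval s) =O[atTop]
      fun y ↦ δ y * (ε y + δ y) := by
    refine IsBigO.of_bound (64 * B * (c + 1) ^ 2) ?_
    have hcε : Tendsto (fun y ↦ (c + 1) * ε y) atTop (𝓝 0) := by simpa using hε.const_mul (c + 1)
    filter_upwards [eventually_gt_atTop 0, hcε.eventually_le_const one_half_pos] with y hy hfar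
    refine (h.norm_tailDefect_polynomial_le hc hμ hB hy hfar).trans ?_
    have hB0 : 0 ≤ B := (norm_nonneg _).trans (hB 1 (by simp))
    gcongr
    exact le_abs_self _
  have hsmall : (fun y ↦ ε y + δ y) =o[atTop] fun _ ↦ (1 : ℝ) :=
    (isLittleO_one_iff ℝ).2 (by simpa using hε.add hδ)
  simpa using hbound.trans_isLittleO ((hreg.isBigO_comp_mul (by norm_num)).mul_isLittleO hsmall)

lemma mul_real_Ioi_le_setIntegral_invScale {τ : Measure ℝ} [IsFiniteMeasure τ] {f : ℝ → ℝ}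
    (hf : ContinuousOn f (Icc 0 1)) (hf0 : ∀ s ∈ Ioo 0 1, 0 ≤ f s) {a m y : ℝ} (ha : 0 < a)
    (ha1 : a ≤ 1) (hm : ∀ s ∈ Ioo 0 a, m ≤ f s) (hy : 0 < y) :
    m * τ.real (Ioi (y / a)) ≤ ∫ s in Ioo 0 1, f s ∂invScale τ y := by
  have hsub : Ioo 0 a ⊆ Ioo 0 1 := Ioo_subset_Ioo_right ha1
  have h_int : IntegrableOn f (Ioo 0 1) (invScale τ y) := integrableOn_Ioo_of_continuousOn_Icc hf
  calc m * τ.real (Ioi (y / a)) = m * (invScale τ y).real (Ioo 0 a) := by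
        rw [invScale_real_Ioo hy ha]
    _ ≤ ∫ s in Ioo 0 a, f s ∂invScale τ y :=
        setIntegral_ge_of_const_le_real measurableSet_Ioo (measure_ne_top _ _) hm
          (h_int.mono_set hsub)
    _ ≤ ∫ s in Ioo 0 1, f s ∂invScale τ y := setIntegral_mono_set h_int
        (ae_restrict_of_forall_mem measurableSet_Ioo hf0) hsub.eventuallyLE

lemma setIntegral_invScale_le_real_Ioi {τ : Measure ℝ} [IsFiniteMeasure τ] {f : ℝ → ℝ}
    (hf : ContinuousOn f (Icc 0 1)) {b y : ℝ} (hb : 0 < b) (hb1 : b ≤ 1)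
    (hf1 : ∀ s ∈ Ioo 0 b, f s ≤ 1) (hf0 : ∀ s ∈ Ico b 1, f s = 0) (hy : 0 < y) :
    ∫ s in Ioo 0 1, f s ∂invScale τ y ≤ τ.real (Ioi (y / b)) := by
  have hsub : Ioo 0 b ⊆ Ioo 0 1 := Ioo_subset_Ioo_right hb1
  have h_int : IntegrableOn f (Ioo 0 1) (invScale τ y) := integrableOn_Ioo_of_continuousOn_Icc hf
  calc ∫ s in Ioo 0 1, f s ∂invScale τ y = ∫ s in Ioo 0 b, f s ∂invScale τ y :=
        setIntegral_eq_of_subset_of_forall_sdiff_eq_zero measurableSet_Ioo hsub fun s hs ↦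
          hf0 s ⟨not_lt.1 fun hlt ↦ hs.2 ⟨hs.1.1, hlt⟩, hs.1.2⟩
    _ ≤ ∫ _ in Ioo 0 b, 1 ∂invScale τ y :=
        setIntegral_mono_on (h_int.mono_set hsub) (integrable_const _) measurableSet_Ioo hf1
    _ = τ.real (Ioi (y / b)) := by
        rw [setIntegral_const, smul_eq_mul, mul_one, invScale_real_Ioo hy hb]

lemma mul_real_Ioi_le_setIntegral_one_sub_sq_pow {τ : Measure ℝ} [IsFiniteMeasure τ] {y : ℝ}
    (hy : 0 < y) :
    (3 / 4) ^ 3 * τ.real (Ioi (2 * y)) ≤ ∫ s in Ioo 0 1, (1 - s ^ 2) ^ 3 ∂invScale τ y := by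
  have := mul_real_Ioi_le_setIntegral_invScale (τ := τ) (f := fun s ↦ (1 - s ^ 2) ^ 3)
    (a := 2⁻¹) (m := (3 / 4) ^ 3) (by fun_prop)
    (fun s hs ↦ pow_nonneg (by nlinarith [hs.1, hs.2]) 3) (by norm_num) (by norm_num)
    (fun s hs ↦ pow_le_pow_left₀ (by norm_num) (by nlinarith [hs.1, hs.2]) 3) hy
  rwa [div_inv_eq_mul, mul_comm y] at this

lemma setIntegral_one_sub_sq_pow_le_real_Ioi {τ : Measure ℝ} [IsFiniteMeasure τ] {y : ℝ}
    (hy : 0 < y) : ∫ s in Ioo 0 1, (1 - s ^ 2) ^ 3 ∂invScale τ y ≤ τ.real (Ioi y) := by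
  have := setIntegral_invScale_le_real_Ioi (τ := τ) (f := fun s ↦ (1 - s ^ 2) ^ 3)
    (by fun_prop) one_pos le_rfl
    (fun s hs ↦ pow_le_one₀ (by nlinarith [hs.1, hs.2]) (by nlinarith [hs.1])) (by simp) hy
  rwa [div_one] at this

-- An a priori bound, needed to control the error of polynomial approximation under `ρ`.
lemma IsBooleanPower.isBigO_tail [IsProbabilityMeasure μ] [IsProbabilityMeasure ρ]
    (h : IsBooleanPower c μ ρ) (hc : 0 < c) (hμ : ∀ᵐ s ∂μ, 0 ≤ s) (hreg : RegVarTail μ α) :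
    (fun y ↦ ρ.real (Ioi y)) =O[atTop] fun y ↦ μ.real (Ioi y) := by
  have hdefect : tailDefect c μ ρ (fun s ↦ (1 - s ^ 2) ^ 3) =o[atTop] fun y ↦ μ.real (Ioi y) := by
    convert h.isLittleO_tailDefect_polynomial hc hμ hreg (C (-1)) using 3 with s
    rw [eval_C]
    ring
  have hdouble : (fun y ↦ ρ.real (Ioi (2 * y))) =O[atTop] fun y ↦ μ.real (Ioi y) := by
    refine IsBigO.trans (IsBigO.of_bound ((3 / 4) ^ 3)⁻¹ ?_)
      (hdefect.isBigO.add ((isBigO_refl _ _).const_mul_left c))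
    filter_upwards [eventually_gt_atTop 0] with y hy
    have hρ := mul_real_Ioi_le_setIntegral_one_sub_sq_pow (τ := ρ) hy
    have hμ := mul_le_mul_of_nonneg_left (setIntegral_one_sub_sq_pow_le_real_Ioi (τ := μ) hy) hc.le
    rw [Real.norm_of_nonneg measureReal_nonneg, le_inv_mul_iff₀ (by norm_num)]
    refine le_trans ?_ (Real.le_norm_self _)
    rw [tailDefect]
    linarith
  have hhalf : Tendsto (fun y : ℝ ↦ 2⁻¹ * y) atTop atTop :=
    tendsto_id.const_mul_atTop (by norm_num)
  have := (hdouble.comp_tendsto hhalf).trans (hreg.isBigO_comp_mul (by norm_num))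
  simpa only [Function.comp_def, mul_inv_cancel_left₀ (two_ne_zero (α := ℝ))] using this

lemma isLittleO_of_forall_exists_approx {ι : Type*} {l : Filter ι} {f g k : ι → ℝ}
    (hk : k =O[l] g)
    (happrox : ∀ η > 0, ∃ e, e =o[l] g ∧ ∀ᶠ y in l, ‖f y - e y‖ ≤ η * ‖k y‖) : f =o[l] g := by
  obtain ⟨K, hK, hkK⟩ := hk.exists_pos
  refine isLittleO_iff.2 fun ε hε ↦ ?_
  obtain ⟨e, he, hfe⟩ := happrox (ε / 2 / K) (by positivity)
  filter_upwards [he.bound (half_pos hε), hfe, hkK.bound] with y hey hfey hky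
  calc ‖f y‖ ≤ ‖e y‖ + ‖f y - e y‖ := norm_le_norm_add_norm_sub' _ _
    _ ≤ ε / 2 * ‖g y‖ + ε / 2 / K * (K * ‖g y‖) := by gcongr; exact hfey.trans (by gcongr)
    _ = ε * ‖g y‖ := by field_simp; ring

lemma IsBooleanPower.isLittleO_tailDefect_mul_continuousOn [IsProbabilityMeasure μ]
    [IsProbabilityMeasure ρ] (h : IsBooleanPower c μ ρ) (hc : 0 < c) (hμ : ∀ᵐ s ∂μ, 0 ≤ s)
    (hreg : RegVarTail μ α) {g : ℝ → ℝ} (hg : ContinuousOn g (Icc 0 1)) :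
    tailDefect c μ ρ (fun s ↦ (s ^ 2 - 1) ^ 3 * g s) =o[atTop] fun y ↦ μ.real (Ioi y) := by
  refine isLittleO_of_forall_exists_approx
    ((h.isBigO_tail hc hμ hreg).add ((isBigO_refl _ _).const_mul_left c)) fun η hη ↦ ?_
  obtain ⟨p, hp⟩ := exists_polynomial_near_of_continuousOn 0 1 g hg η hη
  refine ⟨_, h.isLittleO_tailDefect_polynomial hc hμ hreg p, ?_⟩
  have hdiff : ∀ s ∈ Ioo (0 : ℝ) 1,
      ‖(s ^ 2 - 1) ^ 3 * g s - (s ^ 2 - 1) ^ 3 * p.eval s‖ ≤ η := fun s hs ↦ by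
    have hweight : ‖(s ^ 2 - 1) ^ 3‖ ≤ 1 := by
      rw [norm_pow, Real.norm_eq_abs]
      exact pow_le_one₀ (abs_nonneg _) (abs_le.2 ⟨by nlinarith [hs.1], by nlinarith [hs.1, hs.2]⟩)
    rw [← mul_sub, ← one_mul η]
    refine norm_mul_le_of_le hweight ?_
    rw [norm_sub_rev]
    exact (hp s (Ioo_subset_Icc_self hs)).le
  filter_upwards [eventually_gt_atTop 0] with y hy
  rw [← tailDefect_sub (by fun_prop) (by fun_prop)]
  refine (norm_tailDefect_le hdiff hc.le hy).trans ?_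
  gcongr
  exact le_abs_self _

lemma IsBooleanPower.isLittleO_tailDefect [IsProbabilityMeasure μ] [IsProbabilityMeasure ρ]
    (h : IsBooleanPower c μ ρ) (hc : 0 < c) (hμ : ∀ᵐ s ∂μ, 0 ≤ s) (hreg : RegVarTail μ α)
    {f : ℝ → ℝ} (hf : ContinuousOn f (Icc 0 1)) {b : ℝ} (hb : b ∈ Ioo 0 1)
    (hfb : ∀ s ∈ Ico b 1, f s = 0) :
    tailDefect c μ ρ f =o[atTop] fun y ↦ μ.real (Ioi y) := by
  have hne {s : ℝ} (hs0 : 0 ≤ s) (hs1 : s < 1) : (s ^ 2 - 1) ^ 3 ≠ 0 :=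
    pow_ne_zero 3 (by nlinarith)
  -- Truncating the denominator at `b` keeps the quotient continuous at `1`; `f` vanishes there.
  have hg : ContinuousOn (fun s ↦ f s / ((min s b) ^ 2 - 1) ^ 3) (Icc 0 1) :=
    hf.div (by fun_prop) fun s hs ↦ hne (le_min hs.1 hb.1.le) (min_lt_of_right_lt hb.2)
  have hfg : EqOn (fun s ↦ (s ^ 2 - 1) ^ 3 * (f s / ((min s b) ^ 2 - 1) ^ 3)) f (Ioo 0 1) :=
    fun s hs ↦ by
      rcases lt_or_ge s b with hsb | hbs
      · simp only [min_eq_left hsb.le, mul_div_cancel₀ _ (hne hs.1.le hs.2)]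
      · simp only [hfb s ⟨hbs, hs.2⟩, zero_div, mul_zero]
  rw [← tailDefect_congr hfg]
  exact h.isLittleO_tailDefect_mul_continuousOn hc hμ hreg hg

theorem IsBooleanPower.exists_isLittleO_tail_le [IsProbabilityMeasure μ] [IsProbabilityMeasure ρ]
    (h : IsBooleanPower c μ ρ) (hc : 0 < c) (hμ : ∀ᵐ s ∂μ, 0 ≤ s) (hreg : RegVarTail μ α)
    {a b : ℝ} (ha : 0 < a) (hab : a < b) (hb : b < 1) :
    ∃ e : ℝ → ℝ, e =o[atTop] (fun y ↦ μ.real (Ioi y)) ∧ ∀ y > 0,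
      ρ.real (Ioi (y / a)) ≤ c * μ.real (Ioi (y / b)) + e y ∧
        c * μ.real (Ioi (y / a)) + e y ≤ ρ.real (Ioi (y / b)) := by
  obtain ⟨f, hfb, hfa, hf01⟩ := exists_continuous_zero_one_of_isClosed (X := ℝ)
    isClosed_Ici isClosed_Iic (Iic_disjoint_Ici.2 hab.not_ge).symm
  have hf : ContinuousOn f (Icc 0 1) := f.continuous.continuousOn
  have hlower (τ : Measure ℝ) [IsFiniteMeasure τ] {y : ℝ} (hy : 0 < y) :
      τ.real (Ioi (y / a)) ≤ ∫ s in Ioo 0 1, f s ∂invScale τ y := by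
    simpa using mul_real_Ioi_le_setIntegral_invScale (τ := τ) (m := 1) hf (fun s _ ↦ (hf01 s).1)
      ha (hab.trans hb).le (fun s hs ↦ (hfa (mem_Iic.2 hs.2.le)).ge) hy
  have hupper (τ : Measure ℝ) [IsFiniteMeasure τ] {y : ℝ} (hy : 0 < y) :
      ∫ s in Ioo 0 1, f s ∂invScale τ y ≤ τ.real (Ioi (y / b)) :=
    setIntegral_invScale_le_real_Ioi hf (ha.trans hab) hb.le (fun s _ ↦ (hf01 s).2)
      (fun s hs ↦ hfb hs.1) hy
  refine ⟨tailDefect c μ ρ f, h.isLittleO_tailDefect hc hμ hreg hf ⟨ha.trans hab, hb⟩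
    fun s hs ↦ hfb hs.1, fun y hy ↦ ?_⟩
  rw [tailDefect]
  constructor
  · linarith [hlower ρ hy, mul_le_mul_of_nonneg_left (hupper μ hy) hc.le]
  · linarith [hupper ρ hy, mul_le_mul_of_nonneg_left (hlower μ hy) hc.le]

lemma IsBooleanPower.exists_isLittleO_tail_le_comp_mul [IsProbabilityMeasure μ]
    [IsProbabilityMeasure ρ] (h : IsBooleanPower c μ ρ) (hc : 0 < c) (hμ : ∀ᵐ s ∂μ, 0 ≤ s)
    (hreg : RegVarTail μ α) {t : ℝ} (ht : 0 < t) (ht1 : t < 1) :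
    ∃ e : ℝ → ℝ, e =o[atTop] (fun y ↦ μ.real (Ioi y)) ∧
      ∀ y > 0, ρ.real (Ioi y) ≤ c * μ.real (Ioi (t * y)) + e y := by
  obtain ⟨e, he, hle⟩ := h.exists_isLittleO_tail_le hc hμ hreg (a := t / 2) (b := 1 / 2)
    (by positivity) (by linarith) (by norm_num)
  refine ⟨fun y ↦ e (t / 2 * y), hreg.isLittleO_comp_mul he (by positivity), fun y hy ↦ ?_⟩
  convert (hle (t / 2 * y) (by positivity)).1 using 5 <;> field_simp

lemma IsBooleanPower.exists_isLittleO_comp_mul_le_tail [IsProbabilityMeasure μ]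
    [IsProbabilityMeasure ρ] (h : IsBooleanPower c μ ρ) (hc : 0 < c) (hμ : ∀ᵐ s ∂μ, 0 ≤ s)
    (hreg : RegVarTail μ α) {t : ℝ} (ht : 1 < t) :
    ∃ e : ℝ → ℝ, e =o[atTop] (fun y ↦ μ.real (Ioi y)) ∧
      ∀ y > 0, c * μ.real (Ioi (t * y)) + e y ≤ ρ.real (Ioi y) := by
  have ht0 : 0 < t := one_pos.trans ht
  obtain ⟨e, he, hle⟩ := h.exists_isLittleO_tail_le hc hμ hreg (a := 1 / 2 / t) (b := 1 / 2)
    (div_pos one_half_pos ht0) (div_lt_self one_half_pos ht) (by norm_num)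
  refine ⟨fun y ↦ e (1 / 2 * y), hreg.isLittleO_comp_mul he one_half_pos, fun y hy ↦ ?_⟩
  convert (hle (1 / 2 * y) (by positivity)).2 using 5 <;> field_simp

lemma tendsto_rpow_const_nhds_one (r : ℝ) : Tendsto (fun t : ℝ ↦ t ^ r) (𝓝 1) (𝓝 1) := by
  simpa using (Real.continuousAt_rpow_const 1 r (Or.inl one_ne_zero)).tendsto

lemma RegVarTail.tendsto_mul_add_div [IsFiniteMeasure μ] (hreg : RegVarTail μ α) (hc : c ≠ 0)
    {e : ℝ → ℝ} (he : e =o[atTop] fun y ↦ μ.real (Ioi y)) {t : ℝ} (ht : 0 < t) :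
    Tendsto (fun y ↦ (c * μ.real (Ioi (t * y)) + e y) / (c * μ.real (Ioi y))) atTop
      (𝓝 (t ^ (-α))) := by
  have hlim := (hreg.tendsto_div ht).add (he.tendsto_div_nhds_zero.const_mul c⁻¹)
  rw [mul_zero, add_zero] at hlim
  refine hlim.congr' ?_
  filter_upwards [eventually_ge_atTop 0] with y hy
  have := (hreg.real_Ioi_pos hy).ne'
  field_simp

theorem RegVarTail.tendsto_div_one_of_bounds [IsFiniteMeasure μ] (hreg : RegVarTail μ α)
    (hc : 0 < c) {R : ℝ → ℝ}
    (hupper : ∀ t > 0, t < 1 → ∃ e : ℝ → ℝ, e =o[atTop] (fun y ↦ μ.real (Ioi y)) ∧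
      ∀ y > 0, R y ≤ c * μ.real (Ioi (t * y)) + e y)
    (hlower : ∀ t > 1, ∃ e : ℝ → ℝ, e =o[atTop] (fun y ↦ μ.real (Ioi y)) ∧
      ∀ y > 0, c * μ.real (Ioi (t * y)) + e y ≤ R y) :
    Tendsto (fun y ↦ R y / (c * μ.real (Ioi y))) atTop (𝓝 1) := by
  have hrpow := tendsto_rpow_const_nhds_one (-α)
  refine tendsto_order.2 ⟨fun v hv ↦ ?_, fun v hv ↦ ?_⟩
  · obtain ⟨t, htv, ht⟩ := (((hrpow.mono_left nhdsWithin_le_nhds).eventually_const_lt hv).and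
      (self_mem_nhdsWithin (s := Ioi 1))).exists
    obtain ⟨e, he, hle⟩ := hlower t ht
    filter_upwards [(hreg.tendsto_mul_add_div hc.ne' he (one_pos.trans ht)).eventually_const_lt htv,
      eventually_gt_atTop 0] with y hlt hy
    exact hlt.trans_le (by gcongr; exact hle y hy)
  · obtain ⟨t, htv, ht0, ht1⟩ := (((hrpow.mono_left nhdsWithin_le_nhds).eventually_lt_const hv).and
      (Ioo_mem_nhdsLT zero_lt_one)).exists
    obtain ⟨e, he, hle⟩ := hupper t ht0 ht1
    filter_upwards [(hreg.tendsto_mul_add_div hc.ne' he ht0).eventually_lt_const htv,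
      eventually_gt_atTop 0] with y hlt hy
    exact lt_of_le_of_lt (by gcongr; exact hle y hy) hlt

end TailAsymptotics

theorem boolean_subexponential_general {α c : ℝ} (hc : 0 < c) {μ ρ : Measure ℝ}
    [IsProbabilityMeasure μ] [IsProbabilityMeasure ρ] (hsupp : ∀ᵐ s ∂μ, 0 ≤ s)
    (hreg : RegVarTail μ α) (h : IsBooleanPower c μ ρ) :
    Tendsto (fun y ↦ ρ.real (Ioi y) / (c * μ.real (Ioi y))) atTop (𝓝 1) :=
  hreg.tendsto_div_one_of_bounds hc
    (fun _ ht0 ht1 ↦ h.exists_isLittleO_tail_le_comp_mul hc hsupp hreg ht0 ht1)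
    (fun _ ht ↦ h.exists_isLittleO_comp_mul_le_tail hc hsupp hreg ht)

/-- Boolean subexponentiality of regularly varying measures. -/
theorem boolean_subexponential
    (α : ℝ) (hα : 0 ≤ α) (μ : Measure ℝ) [IsProbabilityMeasure μ]
    (hsupp : μ (Set.Iio (0 : ℝ)) = 0) (hreg : RegVarTail μ α)
    (n : ℕ) (hn : 1 ≤ n)
    (ρ : Measure ℝ) [IsProbabilityMeasure ρ]
    (hK : ∀ z : ℂ, 0 < z.im → Ktrans ρ z = (n : ℂ) * Ktrans μ z) :
    Filter.Tendsto
      (fun y : ℝ => (ρ (Set.Ioi y)).toReal / ((n : ℝ) * (μ (Set.Ioi y)).toReal))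
      Filter.atTop (nhds 1) := by
  exact boolean_subexponential_general (c := n) (by exact_mod_cast hn)
    (ae_nonneg_iff_measure_Iio_eq_zero.2 hsupp) hreg fun z hz ↦ by rw [hK z hz, ofReal_natCast]
end
end

section
/- Let α ≥ 0 and c > 0. Let μ and ν be probability measures on [0,∞), both with regularly varying tails of index −α, such that ν(y,∞)/(c·μ(y,∞)) → 1 as y → ∞. If ρ is a probability measure on ℝ with K_ρ(z) = K_μ(z) + K_ν(z) for all z ∈ ℂ⁺ (so ρ = μ ⊎ ν, the additive Boolean convolution), then ρ(y,∞)/((1+c)·μ(y,∞)) → 1 as y → ∞. -/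
open MeasureTheory Filter Set Complex

noncomputable section

/-!
Put `p_τ(y) = ∫ t / (y + t) dτ(t)` and `T(y) = μ(y, ∞)`. For `τ` on `[0, ∞)` and `y > 0` one has
`G_τ(-y) = -(1 - p_τ(y)) / y`, hence `K_τ(-y) = y p_τ(y) / (1 - p_τ(y))`. Letting `z → -y` in the
hypothesis on `K`, the imaginary part of `G_ρ` tends to `0`, so `ρ` lives on `[0, ∞)` too, and
`r / (1 - r) = u / (1 - u) + v / (1 - v)` for `r = p_ρ`, `u = p_μ`, `v = p_ν`.

Each of `u` and `v` is a polynomial in `1 / y` without constant term up to an error `O(b)`, where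
`b²` and `b / y` are `o(T)`. The expansion of `r - u - v` in `u` and `v` starts in degree two,
so `r - u - v` is a polynomial in `1 / y` up to `o(T)`. A linear combination of dilates whose
coefficients come from the partial fractions of `∏ x / (a i + x)` annihilates that polynomial up to
a high power of `1 / y`, so the integrals of `∏ (t / y) / (a i + t / y)` are additive up to `o(T)`.
As `a i → 1` this passes to high powers of `x / (1 + x)`, then by Weierstrass approximation to
continuous functions of `x / (1 + x)` vanishing near `0`. Sandwiching the indicator of `(1, ∞)`
between two of these bounds `ρ(y, ∞)` by the sum of the tails of `μ` and `ν` at nearby points, and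
regular variation closes the gap.
-/

open Asymptotics Polynomial
open scoped Topology

section Doubling

theorem forall_ge_of_double {p : ℝ → Prop} {x₀ : ℝ} (hx₀ : 0 < x₀)
    (base : ∀ y ∈ Icc x₀ (2 * x₀), p y) (step : ∀ y ≥ x₀, p y → p (2 * y)) :
    ∀ y ≥ x₀, p y := by
  have dyadic : ∀ n : ℕ, ∀ y ∈ Icc x₀ (2 ^ (n + 1) * x₀), p y := by
    intro n
    induction n with
    | zero => simpa using base
    | succ n ih =>
      intro y hy
      rcases le_or_gt y (2 * x₀) with hle | hlt
      · exact base y ⟨hy.1, hle⟩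
      · rw [show y = 2 * (y / 2) by ring]
        refine step _ (by linarith) (ih _ ⟨by linarith, ?_⟩)
        have := hy.2
        rw [pow_succ] at this
        linarith
  intro y hy
  obtain ⟨n, hn⟩ := pow_unbounded_of_one_lt (y / x₀) (one_lt_two (α := ℝ))
  refine dyadic n y ⟨hy, ((div_lt_iff₀ hx₀).1 hn).le.trans ?_⟩
  gcongr <;> norm_num

theorem isBigO_of_double_le {f g : ℝ → ℝ} {θ η K : ℝ} (hθ : 0 ≤ θ) (hθη : θ < η)
    (hf : f =O[atTop] (1 : ℝ → ℝ)) (hg : AntitoneOn g (Ioi 0))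
    (hgpos : ∀ᶠ y in atTop, 0 < g y)
    (hf_double : ∀ᶠ y in atTop, |f (2 * y)| ≤ θ * |f y| + K * g y)
    (hg_double : ∀ᶠ y in atTop, η * g y ≤ g (2 * y)) : f =O[atTop] g := by
  obtain ⟨M, hM0, hM⟩ := hf.exists_pos
  obtain ⟨x₀, hx₀⟩ := eventually_atTop.1
    ((eventually_gt_atTop 0).and (hM.bound.and (hgpos.and (hf_double.and hg_double))))
  have x₀_pos : 0 < x₀ := (hx₀ x₀ le_rfl).1
  have g_end_pos : 0 < g (2 * x₀) := (hx₀ _ (by linarith)).2.2.1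
  set C := max (M / g (2 * x₀)) (K / (η - θ))
  have C_nonneg : 0 ≤ C := le_max_of_le_left (by positivity)
  refine IsBigO.of_bound C ((eventually_ge_atTop x₀).mono fun y hy => ?_)
  rw [Real.norm_eq_abs, Real.norm_of_nonneg (hx₀ y hy).2.2.1.le]
  refine forall_ge_of_double (p := fun y => |f y| ≤ C * g y) x₀_pos ?_ ?_ y hy
  · intro y hy
    have hfM : |f y| ≤ M := by simpa using (hx₀ y hy.1).2.1
    have hgy : g (2 * x₀) ≤ g y :=
      hg (x₀_pos.trans_le hy.1) (by simpa using x₀_pos) hy.2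
    calc |f y| ≤ M / g (2 * x₀) * g (2 * x₀) := by rwa [div_mul_cancel₀ _ g_end_pos.ne']
      _ ≤ C * g y := by gcongr; exact le_max_left _ _
  · intro y hy ih
    obtain ⟨-, -, hgy, hfd, hgd⟩ := hx₀ y hy
    have hK : K ≤ C * (η - θ) := (div_le_iff₀ (sub_pos.2 hθη)).1 (le_max_right _ _)
    calc |f (2 * y)| ≤ θ * |f y| + K * g y := hfd
      _ ≤ θ * (C * g y) + C * (η - θ) * g y := by gcongr
      _ = C * (η * g y) := by ring
      _ ≤ C * g (2 * y) := mul_le_mul_of_nonneg_left hgd C_nonneg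

end Doubling

section UpperTail

/-- The tail function `x ↦ μ(x, ∞)` of a measure on the line, as a real number. -/
def upperTail (μ : Measure ℝ) (x : ℝ) : ℝ := μ.real (Ioi x)

variable (μ : Measure ℝ)

theorem upperTail_nonneg (x : ℝ) : 0 ≤ upperTail μ x := measureReal_nonneg

variable [IsFiniteMeasure μ]

theorem upperTail_antitone : Antitone (upperTail μ) :=
  fun _ _ hxy => measureReal_mono (Ioi_subset_Ioi hxy)

theorem upperTail_le_univ (x : ℝ) : upperTail μ x ≤ μ.real univ :=
  measureReal_mono (subset_univ _)

theorem upperTail_isBigO_one : upperTail μ =O[atTop] (1 : ℝ → ℝ) :=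
  IsBigO.of_bound (μ.real univ) <| .of_forall fun x => by
    simpa [abs_of_nonneg (upperTail_nonneg μ x)] using upperTail_le_univ μ x

theorem tendsto_upperTail_atTop : Tendsto (upperTail μ) atTop (𝓝 0) := by
  have hinter : ⋂ x : ℝ, Ioi x = ∅ := by
    simpa [Set.eq_empty_iff_forall_notMem] using fun x : ℝ => ⟨x, le_rfl⟩
  have h := tendsto_measure_iInter_atTop (μ := μ) (s := fun x : ℝ => Ioi x)
    (fun x => measurableSet_Ioi.nullMeasurableSet) (fun x y hxy => Ioi_subset_Ioi hxy)
    ⟨0, measure_ne_top _ _⟩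
  rw [hinter, measure_empty] at h
  exact (ENNReal.tendsto_toReal ENNReal.zero_ne_top).comp h

end UpperTail

theorem isBigO_rpow_neg_one {γ : ℝ} (hγ : 0 ≤ γ) :
    (fun y : ℝ => y ^ (-γ)) =O[atTop] (1 : ℝ → ℝ) := by
  refine IsBigO.of_bound 1 ((eventually_ge_atTop 1).mono fun y hy => ?_)
  have hy0 : (0 : ℝ) ≤ y := zero_le_one.trans hy
  simpa [abs_of_nonneg (Real.rpow_nonneg hy0 _)]
    using Real.rpow_le_one_of_one_le_of_nonpos hy (neg_nonpos.2 hγ)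

theorem antitoneOn_rpow_neg {γ : ℝ} (hγ : 0 ≤ γ) :
    AntitoneOn (fun y : ℝ => y ^ (-γ)) (Ioi 0) :=
  Real.antitoneOn_rpow_Ioi_of_exponent_nonpos (neg_nonpos.2 hγ)

theorem isLittleO_rpow_rpow_of_lt {p q : ℝ} (hpq : p < q) :
    (fun y : ℝ => y ^ p) =o[atTop] fun y : ℝ => y ^ q := by
  refine isLittleO_of_tendsto' ?_
    ((tendsto_rpow_neg_atTop (sub_pos.2 hpq)).congr' ?_)
  · filter_upwards [eventually_gt_atTop 0] with y hy h0
    exact absurd h0 (Real.rpow_pos_of_pos hy _).ne'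
  · filter_upwards [eventually_gt_atTop 0] with y hy
    rw [← Real.rpow_sub hy, neg_sub]

namespace RegVarTail

variable {μ : Measure ℝ} {α : ℝ}

theorem tendsto_ratio (h : RegVarTail μ α) {a : ℝ} (ha : 0 < a) :
    Tendsto (fun y => upperTail μ (a * y) / upperTail μ y) atTop (𝓝 (a ^ (-α))) :=
  h.2 a ha

variable [IsFiniteMeasure μ]

theorem upperTail_pos (h : RegVarTail μ α) {x : ℝ} (hx : 0 ≤ x) : 0 < upperTail μ x :=
  ENNReal.toReal_pos (h.1 x hx).ne' (measure_ne_top _ _)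

theorem eventually_upperTail_pos (h : RegVarTail μ α) : ∀ᶠ y in atTop, 0 < upperTail μ y :=
  (eventually_ge_atTop 0).mono fun _ => h.upperTail_pos

theorem upperTail_comp_mul_isBigO (h : RegVarTail μ α) {a : ℝ} (ha : 0 < a) :
    (fun y => upperTail μ (a * y)) =O[atTop] upperTail μ :=
  isBigO_of_div_tendsto_nhds
    (h.eventually_upperTail_pos.mono fun _ hy h0 => absurd h0 hy.ne') _ (h.tendsto_ratio ha)

theorem isLittleO_comp_mul_s1 (h : RegVarTail μ α) {f : ℝ → ℝ} (hf : f =o[atTop] upperTail μ)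
    {a : ℝ} (ha : 0 < a) : (fun y => f (a * y)) =o[atTop] upperTail μ :=
  (hf.comp_tendsto (tendsto_id.const_mul_atTop ha)).trans_isBigO (h.upperTail_comp_mul_isBigO ha)

theorem eventually_mul_le_double (h : RegVarTail μ α) {η : ℝ} (hη : η < 2 ^ (-α)) :
    ∀ᶠ y in atTop, η * upperTail μ y ≤ upperTail μ (2 * y) := by
  filter_upwards [(h.tendsto_ratio two_pos).eventually (lt_mem_nhds hη),
    h.eventually_upperTail_pos] with y hy hpos
  exact ((lt_div_iff₀ hpos).1 hy).le

theorem eventually_double_le_mul (h : RegVarTail μ α) {θ : ℝ} (hθ : 2 ^ (-α) < θ) :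
    ∀ᶠ y in atTop, upperTail μ (2 * y) ≤ θ * upperTail μ y := by
  filter_upwards [(h.tendsto_ratio two_pos).eventually (gt_mem_nhds hθ),
    h.eventually_upperTail_pos] with y hy hpos
  exact ((div_lt_iff₀ hpos).1 hy).le

theorem rpow_neg_isBigO (h : RegVarTail μ α) {γ : ℝ} (hγ : 0 ≤ γ) (hαγ : α < γ) :
    (fun y : ℝ => y ^ (-γ)) =O[atTop] upperTail μ := by
  have hpow : (2 : ℝ) ^ (-γ) < 2 ^ (-α) := Real.rpow_lt_rpow_of_exponent_lt one_lt_two (by linarith)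
  obtain ⟨η, hγη, hηα⟩ := exists_between hpow
  refine isBigO_of_double_le (K := 0) (by positivity) hγη (isBigO_rpow_neg_one hγ)
    ((upperTail_antitone μ).antitoneOn _) h.eventually_upperTail_pos ?_
    (h.eventually_mul_le_double hηα)
  filter_upwards [eventually_ge_atTop 0] with y hy
  rw [Real.mul_rpow zero_le_two hy, abs_mul, abs_of_pos (by positivity : (0 : ℝ) < 2 ^ (-γ))]
  simp

theorem rpow_neg_isLittleO (h : RegVarTail μ α) {γ : ℝ} (hγ : 0 < γ) (hαγ : α < γ) :
    (fun y : ℝ => y ^ (-γ)) =o[atTop] upperTail μ := by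
  obtain ⟨δ, hδ, hδγ⟩ := exists_between (max_lt hγ hαγ)
  rw [max_lt_iff] at hδ
  exact (isLittleO_rpow_rpow_of_lt (neg_lt_neg hδγ)).trans_isBigO (h.rpow_neg_isBigO hδ.1.le hδ.2)

theorem pow_inv_isLittleO (h : RegVarTail μ α) {n : ℕ} (hn : 0 < n) (hαn : α < n) :
    (fun y : ℝ => y⁻¹ ^ n) =o[atTop] upperTail μ := by
  refine (h.rpow_neg_isLittleO (Nat.cast_pos.2 hn) hαn).congr' ?_ .rfl
  filter_upwards [eventually_ge_atTop 0] with y hy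
  rw [Real.rpow_neg hy, Real.rpow_natCast, inv_pow]

theorem upperTail_isBigO_rpow_neg (h : RegVarTail μ α) {γ : ℝ} (hγ : 0 ≤ γ) (hγα : γ < α) :
    upperTail μ =O[atTop] fun y : ℝ => y ^ (-γ) := by
  have hpow : (2 : ℝ) ^ (-α) < 2 ^ (-γ) := Real.rpow_lt_rpow_of_exponent_lt one_lt_two (by linarith)
  obtain ⟨θ, hαθ, hθγ⟩ := exists_between hpow
  refine isBigO_of_double_le (K := 0) (hαθ.le.trans' (by positivity)) hθγ (upperTail_isBigO_one μ)
    (antitoneOn_rpow_neg hγ) ?_ ?_ ?_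
  · filter_upwards [eventually_gt_atTop 0] with y hy using Real.rpow_pos_of_pos hy _
  · filter_upwards [h.eventually_double_le_mul hαθ] with y hy
    simpa [abs_of_nonneg, upperTail_nonneg] using hy
  · filter_upwards [eventually_ge_atTop 0] with y hy
    rw [Real.mul_rpow zero_le_two hy]

end RegVarTail

section Integrals

/-- The test functions to be integrated, after rescaling, against measures on `[0, ∞)`: measurable,
and bounded on `[0, ∞)`. -/
structure IsTestFunction (φ : ℝ → ℝ) : Prop where
  measurable : Measurable φ
  bounded : ∃ M, ∀ s ≥ 0, |φ s| ≤ M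

variable {ν : Measure ℝ} [IsFiniteMeasure ν]

theorem IsTestFunction.integrable_comp_div {φ : ℝ → ℝ} (hφ : IsTestFunction φ)
    (hν : ∀ᵐ t ∂ν, 0 ≤ t) {y : ℝ} (hy : 0 ≤ y) : Integrable (fun t => φ (t / y)) ν :=
  let ⟨M, hM⟩ := hφ.bounded
  .of_bound (hφ.measurable.comp (measurable_id.div_const y)).aestronglyMeasurable M <|
    hν.mono fun _ ht => hM _ (div_nonneg ht hy)

theorem integral_comp_div_isBigO_of_le (hν : ∀ᵐ t ∂ν, 0 ≤ t)
    {φ χ T : ℝ → ℝ} (hφ : IsTestFunction φ) (hχ : IsTestFunction χ) (hφ0 : ∀ s ≥ 0, 0 ≤ φ s)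
    {K : ℝ} (hle : ∀ s ≥ 0, φ s ≤ K * χ s) (hχT : (fun y => ∫ t, χ (t / y) ∂ν) =O[atTop] T) :
    (fun y => ∫ t, φ (t / y) ∂ν) =O[atTop] T := by
  refine IsBigO.trans (IsBigO.of_bound' ((eventually_ge_atTop 0).mono fun y hy => ?_))
    (hχT.const_mul_left K)
  rw [Real.norm_of_nonneg (integral_nonneg_of_ae (hν.mono fun t ht => hφ0 _ (div_nonneg ht hy))),
    ← integral_const_mul]
  exact (integral_mono_ae (hφ.integrable_comp_div hν hy)
    ((hχ.integrable_comp_div hν hy).const_mul K)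
    (hν.mono fun t ht => hle _ (div_nonneg ht hy))).trans (le_abs_self _)

theorem integrable_rpow_of_upperTail_isBigO (hν : ∀ᵐ t ∂ν, 0 ≤ t) {β γ : ℝ} (hβ : 0 < β)
    (hβγ : β < γ) (htail : upperTail ν =O[atTop] fun y : ℝ => y ^ (-γ)) :
    Integrable (fun t => t ^ β) ν := by
  have hbot : upperTail ν =O[𝓝[>] 0] fun y : ℝ => y ^ (-(0 : ℝ)) :=
    IsBigO.of_bound (ν.real univ) <| .of_forall fun y => by
      simpa [abs_of_nonneg (upperTail_nonneg ν y)] using upperTail_le_univ ν y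
  have hlayer : IntegrableOn (fun t => t ^ (β - 1) * upperTail ν t) (Ioi 0) :=
    mellin_convergent_of_isBigO_scalar
      ((upperTail_antitone ν).locallyIntegrable.locallyIntegrableOn _) htail hβγ hbot hβ
  refine ⟨by fun_prop, ?_⟩
  rw [hasFiniteIntegral_iff_ofReal (hν.mono fun t ht => Real.rpow_nonneg ht β),
    lintegral_rpow_eq_lintegral_meas_lt_mul ν hν aemeasurable_id' hβ]
  refine ENNReal.mul_lt_top ENNReal.ofReal_lt_top (lt_of_eq_of_lt ?_ hlayer.lintegral_lt_top)
  refine setLIntegral_congr_fun measurableSet_Ioi fun t ht => ?_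
  rw [ENNReal.ofReal_mul (Real.rpow_nonneg (le_of_lt ht) _), mul_comm]
  exact congrArg _ (ofReal_measureReal (μ := ν) (s := Ioi t)).symm

theorem min_one_div_double_pow_le {t y : ℝ} (hy : 0 < y) (ht : 0 ≤ t) (n : ℕ) :
    min 1 (t / (2 * y)) ^ n
      ≤ (1 / 2) ^ n * min 1 (t / y) ^ n + (Ioi y).indicator (fun _ => 1) t := by
  rcases le_or_gt t y with hty | hty
  · have hle : t / y ≤ 1 := (div_le_one hy).2 hty
    have hhalf : t / (2 * y) = 1 / 2 * (t / y) := by field_simp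
    rw [indicator_of_notMem (notMem_Ioi.2 hty), add_zero, ← mul_pow, min_eq_right hle, ← hhalf]
    gcongr
    exact min_le_right _ _
  · rw [indicator_of_mem (mem_Ioi.2 hty)]
    have : min 1 (t / (2 * y)) ^ n ≤ 1 := pow_le_one₀ (by positivity) (min_le_left _ _)
    have : 0 ≤ (1 / 2) ^ n * min 1 (t / y) ^ n := by positivity
    linarith

theorem abs_min_one_pow_le {s : ℝ} (hs : 0 ≤ s) (n : ℕ) : |min 1 s ^ n| ≤ 1 := by
  rw [abs_of_nonneg (by positivity)]
  exact pow_le_one₀ (by positivity) (min_le_left _ _)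

theorem isTestFunction_min_one_pow (n : ℕ) : IsTestFunction fun s => min 1 s ^ n :=
  ⟨by fun_prop, 1, fun _ hs => abs_min_one_pow_le hs n⟩

theorem integrable_min_one_div_pow (hν : ∀ᵐ t ∂ν, 0 ≤ t) (n : ℕ) {y : ℝ} (hy : 0 ≤ y) :
    Integrable (fun t => min 1 (t / y) ^ n) ν :=
  (isTestFunction_min_one_pow n).integrable_comp_div hν hy

theorem integral_min_one_div_double_pow_le (hν : ∀ᵐ t ∂ν, 0 ≤ t) (n : ℕ) {y : ℝ} (hy : 0 < y) :
    ∫ t, min 1 (t / (2 * y)) ^ n ∂ν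
      ≤ (1 / 2) ^ n * ∫ t, min 1 (t / y) ^ n ∂ν + upperTail ν y := by
  have hint := (integrable_min_one_div_pow hν n hy.le).const_mul ((1 / 2) ^ n)
  have hind : Integrable ((Ioi y).indicator fun _ => (1 : ℝ)) ν :=
    (integrable_const 1).indicator measurableSet_Ioi
  calc ∫ t, min 1 (t / (2 * y)) ^ n ∂ν
      ≤ ∫ t, ((1 / 2) ^ n * min 1 (t / y) ^ n + (Ioi y).indicator (fun _ => 1) t) ∂ν :=
        integral_mono_ae (integrable_min_one_div_pow hν n (by positivity)) (hint.add hind) <|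
          hν.mono fun t ht => min_one_div_double_pow_le hy ht n
    _ = (1 / 2) ^ n * ∫ t, min 1 (t / y) ^ n ∂ν + upperTail ν y := by
        rw [integral_add hint hind, integral_const_mul,
          integral_indicator_const _ measurableSet_Ioi, smul_eq_mul, mul_one, upperTail]

theorem integral_min_one_div_pow_isBigO_one (hν : ∀ᵐ t ∂ν, 0 ≤ t) (n : ℕ) :
    (fun y => ∫ t, min 1 (t / y) ^ n ∂ν) =O[atTop] (1 : ℝ → ℝ) := by
  refine IsBigO.of_bound (ν.real univ) ((eventually_ge_atTop 0).mono fun y hy => ?_)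
  simpa using norm_integral_le_of_norm_le_const (f := fun t => min 1 (t / y) ^ n) (C := 1)
    (hν.mono fun t ht => abs_min_one_pow_le (div_nonneg ht hy) n)

theorem RegVarTail.integral_min_one_div_pow_isBigO {μ : Measure ℝ} [IsFiniteMeasure μ] {α : ℝ}
    (hμ : RegVarTail μ α) (hν : ∀ᵐ t ∂ν, 0 ≤ t) (htail : upperTail ν =O[atTop] upperTail μ)
    {n : ℕ} (hn : α < n) :
    (fun y => ∫ t, min 1 (t / y) ^ n ∂ν) =O[atTop] upperTail μ := by
  have hpow : (1 / 2 : ℝ) ^ n < 2 ^ (-α) := by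
    rw [one_div, inv_pow, ← Real.rpow_natCast, ← Real.rpow_neg zero_le_two]
    exact Real.rpow_lt_rpow_of_exponent_lt one_lt_two (neg_lt_neg hn)
  obtain ⟨η, hnη, hηα⟩ := exists_between hpow
  obtain ⟨K, hK⟩ := htail.bound
  refine isBigO_of_double_le (K := K) (by positivity) hnη
    (integral_min_one_div_pow_isBigO_one hν n) ((upperTail_antitone μ).antitoneOn _)
    hμ.eventually_upperTail_pos ?_ (hμ.eventually_mul_le_double hηα)
  filter_upwards [hK, eventually_gt_atTop 0] with y hKy hy
  have hnonneg : ∀ x > 0, 0 ≤ ∫ t, min 1 (t / x) ^ n ∂ν := fun x hx =>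
    integral_nonneg_of_ae (hν.mono fun t ht => by positivity)
  rw [Real.norm_of_nonneg (upperTail_nonneg _ _), Real.norm_of_nonneg (upperTail_nonneg _ _)] at hKy
  rw [abs_of_nonneg (hnonneg _ (by positivity)), abs_of_nonneg (hnonneg y hy)]
  linarith [integral_min_one_div_double_pow_le hν n hy]

end Integrals

section Expansions

theorem isBigO_eval_inv_of_X_pow_dvd {P : ℝ[X]} {n : ℕ} (hP : X ^ n ∣ P) :
    (fun y : ℝ => P.eval y⁻¹) =O[atTop] fun y => y⁻¹ ^ n := by
  obtain ⟨Q, rfl⟩ := hP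
  have hQ : (fun y : ℝ => Q.eval y⁻¹) =O[atTop] (1 : ℝ → ℝ) :=
    (Q.continuous.continuousAt.tendsto.comp tendsto_inv_atTop_zero).isBigO_one ℝ
  simpa [eval_mul] using (isBigO_refl (fun y : ℝ => y⁻¹ ^ n) atTop).mul hQ

theorem isBigO_eval_inv_of_X_dvd {P : ℝ[X]} (hP : X ∣ P) :
    (fun y : ℝ => P.eval y⁻¹) =O[atTop] fun y => y⁻¹ := by
  simpa using isBigO_eval_inv_of_X_pow_dvd (n := 1) (by simpa using hP)

theorem tendsto_eval_inv_of_X_dvd {P : ℝ[X]} (hP : X ∣ P) :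
    Tendsto (fun y : ℝ => P.eval y⁻¹) atTop (𝓝 0) :=
  (isBigO_eval_inv_of_X_dvd hP).trans_tendsto tendsto_inv_atTop_zero

theorem isLittleO_pow_sub_pow {T f g : ℝ → ℝ} (hf : f =O[atTop] (1 : ℝ → ℝ))
    (hg : g =O[atTop] (1 : ℝ → ℝ)) (hfg : (fun y => f y - g y) =o[atTop] T) (n : ℕ) :
    (fun y => f y ^ n - g y ^ n) =o[atTop] T := by
  induction n with
  | zero => simp
  | succ n ih =>
    have hfn : (fun y => f y ^ n) =O[atTop] (1 : ℝ → ℝ) :=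
      (hf.pow n).congr_right fun _ => one_pow n
    have hleft : (fun y => f y ^ n * (f y - g y)) =o[atTop] T := by
      simpa using hfn.mul_isLittleO hfg
    have hright : (fun y => (f y ^ n - g y ^ n) * g y) =o[atTop] T := by
      simpa using ih.mul_isBigO hg
    refine (hleft.add hright).congr_left fun y => ?_
    ring

/-- `f` agrees at `+∞`, up to `O(b)`, with a polynomial without constant term in `1 / y`. -/
def InvPolyBigO (b f : ℝ → ℝ) : Prop :=
  ∃ P : ℝ[X], X ∣ P ∧ (fun y => f y - P.eval y⁻¹) =O[atTop] b

/-- `f` agrees at `+∞`, up to `o(b)`, with a polynomial without constant term in `1 / y`. -/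
def InvPolyLittleO (b f : ℝ → ℝ) : Prop :=
  ∃ P : ℝ[X], X ∣ P ∧ (fun y => f y - P.eval y⁻¹) =o[atTop] b

variable {b T f g : ℝ → ℝ}

theorem InvPolyBigO.isBigO_one (hf : InvPolyBigO b f) (hb : b =O[atTop] (1 : ℝ → ℝ)) :
    f =O[atTop] (1 : ℝ → ℝ) := by
  obtain ⟨P, hP, hfP⟩ := hf
  simpa using (hfP.trans hb).add ((tendsto_eval_inv_of_X_dvd hP).isBigO_one ℝ)

theorem InvPolyBigO.mul (hf : InvPolyBigO b f) (hg : InvPolyBigO b g)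
    (hbb : (fun y => b y * b y) =o[atTop] T) (hinv : (fun y => y⁻¹ * b y) =o[atTop] T) :
    InvPolyLittleO T (fun y => f y * g y) := by
  obtain ⟨P, hP, hfP⟩ := hf
  obtain ⟨Q, hQ, hgQ⟩ := hg
  refine ⟨P * Q, hP.mul_right Q, ?_⟩
  have hPg := ((isBigO_eval_inv_of_X_dvd hP).mul hgQ).trans_isLittleO hinv
  have hQf := ((isBigO_eval_inv_of_X_dvd hQ).mul hfP).trans_isLittleO hinv
  refine ((((hfP.mul hgQ).trans_isLittleO hbb).add hPg).add hQf).congr_left fun y => ?_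
  rw [eval_mul]
  ring

namespace InvPolyLittleO

theorem invPolyBigO (hf : InvPolyLittleO T f) : InvPolyBigO T f :=
  let ⟨P, hP, hfP⟩ := hf
  ⟨P, hP, hfP.isBigO⟩

theorem tendsto_zero (hf : InvPolyLittleO T f) (hT : Tendsto T atTop (𝓝 0)) :
    Tendsto f atTop (𝓝 0) := by
  obtain ⟨P, hP, hfP⟩ := hf
  simpa using (hfP.isBigO.trans_tendsto hT).add (tendsto_eval_inv_of_X_dvd hP)

theorem congr' (hf : InvPolyLittleO T f) (hfg : f =ᶠ[atTop] g) : InvPolyLittleO T g := by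
  obtain ⟨P, hP, hfP⟩ := hf
  exact ⟨P, hP, hfP.congr' (hfg.mono fun y hy => by simp only [hy]) .rfl⟩

theorem of_isLittleO (hf : f =o[atTop] T) : InvPolyLittleO T f :=
  ⟨0, dvd_zero X, by simpa using hf⟩

theorem add (hf : InvPolyLittleO T f) (hg : InvPolyLittleO T g) :
    InvPolyLittleO T (fun y => f y + g y) := by
  obtain ⟨P, hP, hfP⟩ := hf
  obtain ⟨Q, hQ, hgQ⟩ := hg
  refine ⟨P + Q, dvd_add hP hQ, (hfP.add hgQ).congr_left fun y => ?_⟩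
  rw [eval_add]
  ring

theorem const_mul (hf : InvPolyLittleO T f) (k : ℝ) : InvPolyLittleO T (fun y => k * f y) := by
  obtain ⟨P, hP, hfP⟩ := hf
  refine ⟨C k * P, hP.mul_left _, (hfP.const_mul_left k).congr_left fun y => ?_⟩
  rw [eval_mul, eval_C, mul_sub]

theorem sum {ι : Type*} {s : Finset ι} {F : ι → ℝ → ℝ} (hF : ∀ i ∈ s, InvPolyLittleO T (F i)) :
    InvPolyLittleO T (fun y => ∑ i ∈ s, F i y) := by
  classical
  induction s using Finset.induction_on with
  | empty => exact ⟨0, dvd_zero X, by simp⟩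
  | insert i s hi ih =>
    simp only [Finset.sum_insert hi]
    exact (hF i (s.mem_insert_self i)).add (ih fun j hj => hF j (Finset.mem_insert_of_mem hj))

theorem mul_invPolyBigO (hf : InvPolyLittleO T f) (hg : InvPolyBigO b g)
    (hb : b =O[atTop] (1 : ℝ → ℝ)) (hinv : (fun y => y⁻¹ * b y) =o[atTop] T) :
    InvPolyLittleO T (fun y => f y * g y) := by
  have hg_bdd := hg.isBigO_one hb
  obtain ⟨P, hP, hfP⟩ := hf
  obtain ⟨Q, -, hgQ⟩ := hg
  refine ⟨P * Q, hP.mul_right Q, ?_⟩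
  have hfPg : (fun y => (f y - P.eval y⁻¹) * g y) =o[atTop] T := by
    simpa using hfP.mul_isBigO hg_bdd
  have hPg := ((isBigO_eval_inv_of_X_dvd hP).mul hgQ).trans_isLittleO hinv
  refine (hfPg.add hPg).congr_left fun y => ?_
  rw [eval_mul]
  ring

theorem pow (hf : InvPolyLittleO T f) (hT : T =O[atTop] (1 : ℝ → ℝ)) {n : ℕ} (hn : n ≠ 0) :
    InvPolyLittleO T (fun y => f y ^ n) := by
  have hf_bdd := hf.invPolyBigO.isBigO_one hT
  obtain ⟨P, hP, hfP⟩ := hf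
  refine ⟨P ^ n, dvd_pow hP hn, ?_⟩
  simpa only [eval_pow] using
    isLittleO_pow_sub_pow hf_bdd ((tendsto_eval_inv_of_X_dvd hP).isBigO_one ℝ) hfP n

theorem pow_isLittleO (hf : InvPolyLittleO T f) (hT : T =O[atTop] (1 : ℝ → ℝ)) {n : ℕ}
    (hn : (fun y : ℝ => y⁻¹ ^ n) =o[atTop] T) : (fun y => f y ^ n) =o[atTop] T := by
  have hf_bdd := hf.invPolyBigO.isBigO_one hT
  obtain ⟨P, hP, hfP⟩ := hf
  have hpow := isLittleO_pow_sub_pow hf_bdd ((tendsto_eval_inv_of_X_dvd hP).isBigO_one ℝ) hfP n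
  have hPn := (isBigO_eval_inv_of_X_pow_dvd (pow_dvd_pow_of_dvd hP n)).trans_isLittleO hn
  simpa using hpow.add hPn

theorem div_one_sub (hf : InvPolyLittleO T f) (hT : Tendsto T atTop (𝓝 0)) {n : ℕ}
    (hn : (fun y : ℝ => y⁻¹ ^ n) =o[atTop] T) :
    InvPolyLittleO T (fun y => f y / (1 - f y)) := by
  have hT_bdd : T =O[atTop] (1 : ℝ → ℝ) := hT.isBigO_one ℝ
  have hf0 := hf.tendsto_zero hT
  have hquot : (fun y => f y / (1 - f y)) =O[atTop] (1 : ℝ → ℝ) :=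
    (hf0.div (hf0.const_sub 1) (by simp)).isBigO_one ℝ
  have hrem : (fun y => f y ^ n * (f y / (1 - f y))) =o[atTop] T := by
    simpa using (hf.pow_isLittleO hT_bdd hn).mul_isBigO hquot
  have hsum : InvPolyLittleO T (fun y => ∑ k ∈ Finset.range n, f y ^ (k + 1)) :=
    .sum fun k _ => hf.pow hT_bdd k.succ_ne_zero
  refine (hsum.add (of_isLittleO hrem)).congr' ?_
  filter_upwards [hf0.eventually_ne zero_ne_one] with y hy
  have hy' : 1 - f y ≠ 0 := sub_ne_zero.2 hy.symm
  have hgeom : ∑ k ∈ Finset.range n, f y ^ (k + 1) = f y * ((1 - f y ^ n) / (1 - f y)) := by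
    simp only [_root_.pow_succ', ← Finset.mul_sum]
    rw [← mul_neg_geom_sum, mul_div_cancel_left₀ _ hy']
  rw [hgeom]
  field_simp
  ring

end InvPolyLittleO

end Expansions

section NegPsi

/-- `∫ t / (y + t) dτ(t)`, which is `-ψ_τ(-y)` for `ψ_τ(z) = z G_τ(z) - 1`: the values on the
negative half-line of the moment generating function of `τ` in the variable `1 / z`. -/
def negPsi (τ : Measure ℝ) (y : ℝ) : ℝ := ∫ t, t / (y + t) ∂τ

theorem div_add_nonneg {t y : ℝ} (hy : 0 < y) (ht : 0 ≤ t) : 0 ≤ t / (y + t) := by positivity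

theorem div_add_lt_one {t y : ℝ} (hy : 0 < y) (ht : 0 ≤ t) : t / (y + t) < 1 :=
  (div_lt_one (by positivity)).2 (by linarith)

theorem div_add_le_min {t y : ℝ} (hy : 0 < y) (ht : 0 ≤ t) : t / (y + t) ≤ min 1 (t / y) :=
  le_min (div_add_lt_one hy ht).le (by gcongr; linarith)

theorem negPsi_nonneg {τ : Measure ℝ} (hτ : ∀ᵐ t ∂τ, 0 ≤ t) {y : ℝ} (hy : 0 < y) :
    0 ≤ negPsi τ y :=
  integral_nonneg_of_ae (hτ.mono fun _ ht => div_add_nonneg hy ht)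

theorem div_add_eq_geom_sum {t y : ℝ} (hy : 0 < y) (ht : 0 ≤ t) (p : ℕ) :
    t / (y + t) = ∑ j ∈ Finset.range p, -(-t) ^ (j + 1) * y⁻¹ ^ (j + 1)
      + (-(t / y)) ^ p * (t / (y + t)) := by
  have hsum : ∑ j ∈ Finset.range p, -(-t) ^ (j + 1) * y⁻¹ ^ (j + 1)
      = t / y * ∑ j ∈ Finset.range p, (-(t / y)) ^ j := by
    rw [Finset.mul_sum]
    refine Finset.sum_congr rfl fun j _ => ?_
    rw [neg_mul, ← mul_pow, pow_succ']
    ring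
  have hkernel : t / (y + t) * (1 - -(t / y)) = t / y := by
    rw [sub_neg_eq_add]
    field_simp
  rw [hsum]
  linear_combination (∑ j ∈ Finset.range p, (-(t / y)) ^ j) * hkernel
    - t / (y + t) * mul_neg_geom_sum (-(t / y)) p

theorem pow_mul_min_one_le_rpow {s β : ℝ} (hs : 0 ≤ s) {p : ℕ} (hpβ : p ≤ β) (hβp : β ≤ p + 1) :
    s ^ p * min 1 s ≤ s ^ β := by
  rcases le_total s 1 with h | h
  · rw [min_eq_right h, ← pow_succ, ← Real.rpow_natCast]
    exact Real.rpow_le_rpow_of_exponent_ge' hs h (p.cast_nonneg.trans hpβ) (by simpa using hβp)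
  · rw [min_eq_left h, mul_one, ← Real.rpow_natCast]
    exact Real.rpow_le_rpow_of_exponent_le h hpβ

variable {ν : Measure ℝ} [IsFiniteMeasure ν]

theorem integrable_div_add (hν : ∀ᵐ t ∂ν, 0 ≤ t) {y : ℝ} (hy : 0 < y) :
    Integrable (fun t => t / (y + t)) ν :=
  .of_bound (measurable_id.div (measurable_id.const_add y)).aestronglyMeasurable 1 <|
    hν.mono fun t ht => by
      rw [Real.norm_of_nonneg (div_add_nonneg hy ht)]
      exact (div_add_lt_one hy ht).le

theorem integrable_pow_of_integrable_rpow (hν : ∀ᵐ t ∂ν, 0 ≤ t) {β : ℝ}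
    (hint : Integrable (fun t => t ^ β) ν) {k : ℕ} (hk : k ≤ β) :
    Integrable (fun t => t ^ k) ν := by
  refine ((integrable_const 1).add hint).mono' (by fun_prop) (hν.mono fun t ht => ?_)
  rw [Real.norm_of_nonneg (pow_nonneg ht k), Pi.add_apply]
  have hβ : 0 ≤ t ^ β := Real.rpow_nonneg ht β
  rcases le_total t 1 with h | h
  · linarith [pow_le_one₀ (n := k) ht h]
  · have := Real.rpow_le_rpow_of_exponent_le h hk
    rw [Real.rpow_natCast] at this
    linarith

theorem abs_negPsi_remainder_le {β : ℝ} {p : ℕ} (hpβ : p ≤ β) (hβp : β ≤ p + 1)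
    {t y : ℝ} (hy : 0 < y) (ht : 0 ≤ t) :
    |(-(t / y)) ^ p * (t / (y + t))| ≤ y ^ (-β) * t ^ β := by
  have hs : 0 ≤ t / y := by positivity
  calc |(-(t / y)) ^ p * (t / (y + t))| = (t / y) ^ p * (t / (y + t)) := by
        rw [abs_mul, abs_pow, abs_neg, abs_of_nonneg hs, abs_of_nonneg (div_add_nonneg hy ht)]
    _ ≤ (t / y) ^ p * min 1 (t / y) := by gcongr; exact div_add_le_min hy ht
    _ ≤ (t / y) ^ β := pow_mul_min_one_le_rpow hs hpβ hβp
    _ = y ^ (-β) * t ^ β := by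
        rw [Real.div_rpow ht hy.le, Real.rpow_neg hy.le, div_eq_inv_mul]

theorem negPsi_eq_moments_add_remainder (hν : ∀ᵐ t ∂ν, 0 ≤ t) {p : ℕ}
    (hmom : ∀ j < p, Integrable (fun t => t ^ (j + 1)) ν) {y : ℝ} (hy : 0 < y) :
    negPsi ν y = ∑ j ∈ Finset.range p, (∫ t, -(-t) ^ (j + 1) ∂ν) * y⁻¹ ^ (j + 1)
      + ∫ t, (-(t / y)) ^ p * (t / (y + t)) ∂ν := by
  have hterm : ∀ j ∈ Finset.range p,
      Integrable (fun t => -(-t) ^ (j + 1) * y⁻¹ ^ (j + 1)) ν := fun j hj => by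
    refine (((hmom j (Finset.mem_range.1 hj)).const_mul ((-1) ^ (j + 1))).neg.mul_const
      (y⁻¹ ^ (j + 1))).congr (.of_forall fun t => ?_)
    simp only [Pi.neg_apply, ← mul_pow, neg_one_mul]
  have hsum := integrable_finsetSum _ hterm
  have hkernel : (fun t => t / (y + t)) =ᵐ[ν] fun t =>
      ∑ j ∈ Finset.range p, -(-t) ^ (j + 1) * y⁻¹ ^ (j + 1) + (-(t / y)) ^ p * (t / (y + t)) :=
    hν.mono fun t ht => div_add_eq_geom_sum hy ht p
  have hrem : Integrable (fun t => (-(t / y)) ^ p * (t / (y + t))) ν := by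
    refine ((integrable_div_add hν hy).sub hsum).congr (hkernel.mono fun t ht => ?_)
    simp only [Pi.sub_apply]
    linarith
  rw [negPsi, integral_congr_ae hkernel, integral_add hsum hrem, integral_finsetSum _ hterm]
  simp only [integral_mul_const]

theorem invPolyBigO_negPsi_of_integrable_rpow (hν : ∀ᵐ t ∂ν, 0 ≤ t) {β : ℝ} {p : ℕ}
    (hpβ : p ≤ β) (hβp : β ≤ p + 1) (hint : Integrable (fun t => t ^ β) ν) :
    InvPolyBigO (fun y => y ^ (-β)) (negPsi ν) := by
  have hmom : ∀ j < p, Integrable (fun t => t ^ (j + 1)) ν := fun j hj =>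
    integrable_pow_of_integrable_rpow hν hint (hpβ.trans' (by exact_mod_cast hj))
  refine ⟨∑ j ∈ Finset.range p, C (∫ t, -(-t) ^ (j + 1) ∂ν) * X ^ (j + 1),
    Finset.dvd_sum fun j _ => (dvd_pow_self X j.succ_ne_zero).mul_left _,
    IsBigO.of_bound (∫ t, t ^ β ∂ν) ?_⟩
  filter_upwards [eventually_gt_atTop 0] with y hy
  have hrem : negPsi ν y
      - (∑ j ∈ Finset.range p, C (∫ t, -(-t) ^ (j + 1) ∂ν) * X ^ (j + 1)).eval y⁻¹
      = ∫ t, (-(t / y)) ^ p * (t / (y + t)) ∂ν := by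
    simp [negPsi_eq_moments_add_remainder hν hmom hy, eval_finsetSum]
  rw [hrem, Real.norm_of_nonneg (Real.rpow_nonneg hy.le _), mul_comm, ← integral_const_mul]
  exact norm_integral_le_of_norm_le (hint.const_mul _) <|
    hν.mono fun t ht => abs_negPsi_remainder_le hpβ hβp hy ht

end NegPsi

section BooleanExpansion

theorem exists_expansion_exponent {α : ℝ} (hα : 0 < α) :
    ∃ (p : ℕ) (β : ℝ), 0 < β ∧ β < α ∧ p ≤ β ∧ β ≤ p + 1 ∧ α < 1 + β ∧ α < β + β := by
  obtain ⟨p, hp⟩ := Nat.exists_eq_succ_of_ne_zero (Nat.ceil_pos.2 hα).ne'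
  have hαp : α ≤ p + 1 := by simpa [hp] using Nat.le_ceil α
  have hpα : (p : ℝ) < α := Nat.lt_ceil.1 (by omega)
  obtain ⟨β, hβ, hβα⟩ := exists_between (max_lt hpα (half_lt_self hα))
  rw [max_lt_iff] at hβ
  exact ⟨p, β, by linarith, hβα, hβ.1.le, by linarith, by linarith, by linarith⟩

theorem inv_mul_rpow_neg_eventuallyEq (β : ℝ) :
    (fun y : ℝ => y ^ (-(1 + β))) =ᶠ[atTop] fun y => y⁻¹ * y ^ (-β) := by
  filter_upwards [eventually_gt_atTop 0] with y hy
  rw [neg_add, Real.rpow_add hy, Real.rpow_neg_one]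

theorem rpow_neg_mul_self_eventuallyEq (β : ℝ) :
    (fun y : ℝ => y ^ (-(β + β))) =ᶠ[atTop] fun y => y ^ (-β) * y ^ (-β) := by
  filter_upwards [eventually_gt_atTop 0] with y hy
  rw [neg_add, Real.rpow_add hy]

theorem RegVarTail.negPsi_isBigO {μ ν : Measure ℝ} [IsFiniteMeasure μ] [IsFiniteMeasure ν] {α : ℝ}
    (hμ : RegVarTail μ α) (hα : α < 1) (hν : ∀ᵐ t ∂ν, 0 ≤ t)
    (htail : upperTail ν =O[atTop] upperTail μ) : negPsi ν =O[atTop] upperTail μ := by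
  refine IsBigO.trans (IsBigO.of_bound 1 ((eventually_gt_atTop 0).mono fun y hy => ?_))
    (hμ.integral_min_one_div_pow_isBigO hν htail (n := 1) (by simpa using hα))
  rw [Real.norm_of_nonneg (negPsi_nonneg hν hy), one_mul]
  refine (integral_mono_ae (integrable_div_add hν hy) (integrable_min_one_div_pow hν 1 hy.le) <|
    hν.mono fun t ht => ?_).trans (le_abs_self _)
  simpa using div_add_le_min hy ht

theorem RegVarTail.exists_invPolyBigO_negPsi {μ : Measure ℝ} [IsFiniteMeasure μ] {α : ℝ}
    (hμ : RegVarTail μ α) :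
    ∃ b : ℝ → ℝ, b =O[atTop] (1 : ℝ → ℝ) ∧ (fun y => b y * b y) =o[atTop] upperTail μ ∧
      (fun y => y⁻¹ * b y) =o[atTop] upperTail μ ∧
      ∀ ν : Measure ℝ, IsFiniteMeasure ν → (∀ᵐ t ∂ν, 0 ≤ t) →
        upperTail ν =O[atTop] upperTail μ → InvPolyBigO b (negPsi ν) := by
  rcases le_or_gt α 0 with hα | hα
  · have hmul : ∀ {f : ℝ → ℝ}, Tendsto f atTop (𝓝 0) →
        (fun y => f y * upperTail μ y) =o[atTop] upperTail μ := fun hf => by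
      simpa using ((isLittleO_one_iff ℝ).2 hf).mul_isBigO (isBigO_refl (upperTail μ) atTop)
    refine ⟨upperTail μ, upperTail_isBigO_one μ, hmul (tendsto_upperTail_atTop μ),
      hmul tendsto_inv_atTop_zero, fun ν _ hν htail => ⟨0, dvd_zero X, ?_⟩⟩
    simpa using hμ.negPsi_isBigO (by linarith) hν htail
  · obtain ⟨p, β, hβ, hβα, hpβ, hβp, hα1, hα2⟩ := exists_expansion_exponent hα
    refine ⟨fun y => y ^ (-β), isBigO_rpow_neg_one hβ.le,
      (hμ.rpow_neg_isLittleO (by linarith) hα2).congr' (rpow_neg_mul_self_eventuallyEq β) .rfl,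
      (hμ.rpow_neg_isLittleO (by linarith) hα1).congr' (inv_mul_rpow_neg_eventuallyEq β) .rfl,
      fun ν _ hν htail => ?_⟩
    obtain ⟨γ, hβγ, hγα⟩ := exists_between hβα
    exact invPolyBigO_negPsi_of_integrable_rpow hν hpβ hβp <|
      integrable_rpow_of_upperTail_isBigO hν hβ hβγ <|
        htail.trans (hμ.upperTail_isBigO_rpow_neg (by linarith) hγα)

theorem sub_sub_eq_of_div_one_sub_eq_add {r u v : ℝ} (hr : r < 1) (hu0 : 0 ≤ u) (hu : u < 1)
    (hv : v < 1) (h : r / (1 - r) = u / (1 - u) + v / (1 - v)) :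
    r - u - v = u * v / (1 - u * v) * u + u * v / (1 - u * v) * v
      + -2 * (u * v / (1 - u * v)) := by
  have hr' : 1 - r ≠ 0 := by linarith
  have hu' : 1 - u ≠ 0 := by linarith
  have hv' : 1 - v ≠ 0 := by linarith
  have huv' : 1 - u * v ≠ 0 := by nlinarith
  field_simp at h ⊢
  linear_combination h

theorem invPolyLittleO_sub_sub_of_div_one_sub_eq_add {T b r u v : ℝ → ℝ}
    (hT : Tendsto T atTop (𝓝 0)) {n : ℕ} (hn : (fun y : ℝ => y⁻¹ ^ n) =o[atTop] T)
    (hb : b =O[atTop] (1 : ℝ → ℝ)) (hbb : (fun y => b y * b y) =o[atTop] T)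
    (hinv : (fun y => y⁻¹ * b y) =o[atTop] T) (hu : InvPolyBigO b u) (hv : InvPolyBigO b v)
    (hr1 : ∀ᶠ y in atTop, r y < 1) (hu01 : ∀ᶠ y in atTop, u y ∈ Ico 0 1)
    (hv1 : ∀ᶠ y in atTop, v y < 1)
    (hrel : ∀ᶠ y in atTop, r y / (1 - r y) = u y / (1 - u y) + v y / (1 - v y)) :
    InvPolyLittleO T (fun y => r y - u y - v y) := by
  have hq : InvPolyLittleO T (fun y => u y * v y / (1 - u y * v y)) :=
    (hu.mul hv hbb hinv).div_one_sub hT hn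
  refine (((hq.mul_invPolyBigO hu hb hinv).add (hq.mul_invPolyBigO hv hb hinv)).add
    (hq.const_mul (-2))).congr' ?_
  filter_upwards [hr1, hu01, hv1, hrel] with y hr hu hv hy
  exact (sub_sub_eq_of_div_one_sub_eq_add hr hu.1 hu.2 hv hy).symm

end BooleanExpansion

section NullSets

theorem measure_eq_zero_of_closedBall_isLittleO {ρ : Measure ℝ} [IsFiniteMeasure ρ] {s : Set ℝ}
    (hs : ∀ x ∈ s, Tendsto (fun ε => ρ.real (Metric.closedBall x ε) / ε) (𝓝[>] 0) (𝓝 0)) :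
    ρ s = 0 := by
  refine measure_null_of_locally_null s fun x _ =>
    ⟨s ∩ Metric.ball x 1, inter_mem_nhdsWithin s (Metric.ball_mem_nhds x one_pos), ?_⟩
  have hsmall : ∀ δ : NNReal, 0 < δ → ρ (s ∩ Metric.ball x 1) ≤ δ * 2 := fun δ hδ => by
    have hcompare : ρ (s ∩ Metric.ball x 1) ≤ (δ • volume : Measure ℝ) (s ∩ Metric.ball x 1) := by
      refine (Besicovitch.vitaliFamily ρ).measure_le_of_frequently_le _ .rfl _ fun z hz =>
        (Besicovitch.tendsto_filterAt ρ z).frequently (Eventually.frequently ?_)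
      filter_upwards [(hs z hz.1).eventually (gt_mem_nhds (NNReal.coe_pos.2 hδ)),
        self_mem_nhdsWithin] with ε hε (hε0 : 0 < ε)
      rw [Measure.smul_apply, Real.volume_closedBall, ← ofReal_measureReal, ENNReal.smul_def,
        smul_eq_mul, ← ENNReal.ofReal_coe_nnreal, ← ENNReal.ofReal_mul δ.coe_nonneg]
      refine ENNReal.ofReal_le_ofReal (((div_lt_iff₀ hε0).1 hε).le.trans ?_)
      gcongr
      linarith
    calc ρ (s ∩ Metric.ball x 1) ≤ δ * volume (s ∩ Metric.ball x 1) := hcompare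
      _ ≤ δ * volume (Metric.ball x 1) := by gcongr; exact inter_subset_right
      _ = δ * 2 := by simp [Real.volume_ball]
  refine nonpos_iff_eq_zero.1 (ENNReal.le_of_forall_pos_le_add fun δ hδ _ => ?_)
  calc ρ (s ∩ Metric.ball x 1) ≤ (δ / 2 : NNReal) * 2 := hsmall _ (half_pos hδ)
    _ = 0 + δ := by rw [zero_add]; exact_mod_cast div_mul_cancel₀ δ two_ne_zero

end NullSets

section CauchyTransform

theorem norm_inv_sub_ofReal_le_s1 {z : ℂ} (hz : 0 < z.im) (t : ℝ) : ‖(z - t)⁻¹‖ ≤ z.im⁻¹ := by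
  rw [norm_inv]
  exact inv_anti₀ hz (by simpa [abs_of_pos hz] using Complex.abs_im_le_norm (z - t))

theorem integrable_inv_sub_ofReal (τ : Measure ℝ) [IsFiniteMeasure τ] {z : ℂ} (hz : 0 < z.im) :
    Integrable (fun t : ℝ => (z - t)⁻¹) τ :=
  .of_bound (by fun_prop) _ (.of_forall (norm_inv_sub_ofReal_le_s1 hz))

theorem measureReal_closedBall_le (τ : Measure ℝ) [IsFiniteMeasure τ] (x : ℝ) {ε : ℝ}
    (hε : 0 < ε) :
    τ.real (Metric.closedBall x ε) ≤ 2 * ε * -(cauchyG τ (x + ε * I)).im := by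
  have hint : Integrable (fun t : ℝ => (x + ε * I - t : ℂ)⁻¹) τ :=
    integrable_inv_sub_ofReal τ (by simpa using hε)
  have him : ∀ t : ℝ, -(x + ε * I - t : ℂ)⁻¹.im = ε / ((x - t) ^ 2 + ε ^ 2) := fun t => by
    simp [Complex.inv_im, Complex.normSq_apply, neg_div, pow_two]
  have hG : -(cauchyG τ (x + ε * I)).im = ∫ t, ε / ((x - t) ^ 2 + ε ^ 2) ∂τ := by
    rw [cauchyG, ← RCLike.im_eq_complex_im, ← integral_im hint, ← integral_neg]
    exact integral_congr_ae (.of_forall him)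
  have hball : Metric.closedBall x ε ⊆ {t | (2 * ε)⁻¹ ≤ ε / ((x - t) ^ 2 + ε ^ 2)} := fun t ht => by
    have hsq : (x - t) ^ 2 ≤ ε ^ 2 :=
      sq_le_sq' (by linarith [(abs_le.1 (Metric.mem_closedBall.1 ht)).2])
        (by linarith [(abs_le.1 (Metric.mem_closedBall.1 ht)).1])
    rw [mem_ofPred_eq, inv_eq_one_div, div_le_div_iff₀ (by positivity) (by positivity)]
    nlinarith
  have hmarkov := mul_meas_ge_le_integral_of_nonneg (μ := τ)
    (f := fun t => ε / ((x - t) ^ 2 + ε ^ 2)) (.of_forall fun t => by positivity)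
    (hint.im.neg.congr (.of_forall him)) (2 * ε)⁻¹
  rw [hG, ← div_le_iff₀' (by positivity), div_eq_inv_mul]
  exact hmarkov.trans' (mul_le_mul_of_nonneg_left (measureReal_mono hball) (by positivity))

theorem measure_eq_zero_of_tendsto_cauchyG_im {τ : Measure ℝ} [IsFiniteMeasure τ] {s : Set ℝ}
    (hs : ∀ x ∈ s, Tendsto (fun ε : ℝ => (cauchyG τ (x + ε * I)).im) (𝓝[>] 0) (𝓝 0)) :
    τ s = 0 := by
  refine measure_eq_zero_of_closedBall_isLittleO fun x hx =>
    squeeze_zero' ?_ ?_ (by simpa using (hs x hx).neg.const_mul 2)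
  · filter_upwards [self_mem_nhdsWithin] with ε (hε : 0 < ε) using by positivity
  · filter_upwards [self_mem_nhdsWithin] with ε (hε : 0 < ε)
    rw [div_le_iff₀ hε]
    linarith [measureReal_closedBall_le τ x hε]

end CauchyTransform

section NegativeHalfLine

theorem tendsto_ofReal_add_mul_I (x : ℝ) :
    Tendsto (fun ε : ℝ => (x + ε * I : ℂ)) (𝓝[>] 0) (𝓝 x) := by
  have hcont : ContinuousAt (fun ε : ℝ => (x + ε * I : ℂ)) 0 := by fun_prop
  simpa using hcont.tendsto.mono_left nhdsWithin_le_nhds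

variable {τ : Measure ℝ}

theorem tendsto_cauchyG_neg [IsFiniteMeasure τ] (hτ : ∀ᵐ t ∂τ, 0 ≤ t) {y : ℝ} (hy : 0 < y) :
    Tendsto (fun ε : ℝ => cauchyG τ ((-y : ℝ) + ε * I)) (𝓝[>] 0) (𝓝 (cauchyG τ (-y : ℝ))) := by
  refine tendsto_integral_filter_of_dominated_convergence (fun _ => y⁻¹)
    (.of_forall fun ε => by fun_prop) (.of_forall fun ε => hτ.mono fun t ht => ?_)
    (integrable_const _) (hτ.mono fun t ht => ?_)
  · rw [norm_inv]
    refine inv_anti₀ hy ((Complex.abs_re_le_norm _).trans' ?_)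
    rw [show ((-y : ℝ) + ε * I - t : ℂ).re = -(y + t) by simp; ring, abs_neg]
    exact (le_abs_self _).trans' (by linarith)
  · have hne : ((-y : ℝ) - t : ℂ) ≠ 0 := by
      rw [← ofReal_sub]
      exact_mod_cast (by linarith : -y - t ≠ 0)
    have hcont : ContinuousAt (fun ε : ℝ => ((-y : ℝ) + ε * I - t : ℂ)⁻¹) 0 :=
      ContinuousAt.inv₀ (by fun_prop) (by simpa using hne)
    simpa using hcont.tendsto.mono_left nhdsWithin_le_nhds

variable [IsProbabilityMeasure τ]

theorem negPsi_lt_one (hτ : ∀ᵐ t ∂τ, 0 ≤ t) {y : ℝ} (hy : 0 < y) : negPsi τ y < 1 := by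
  obtain ⟨t, ht, hle⟩ := exists_notMem_null_integral_le (integrable_div_add hτ hy) hτ
  exact hle.trans_lt (div_add_lt_one hy (by simpa using ht))

theorem cauchyG_neg (hτ : ∀ᵐ t ∂τ, 0 ≤ t) {y : ℝ} (hy : 0 < y) :
    cauchyG τ (-y : ℝ) = ((negPsi τ y - 1) / y : ℝ) := by
  have hkernel : (fun t : ℝ => (((-y : ℝ) : ℂ) - t)⁻¹) =ᵐ[τ]
      fun t => (((t / (y + t) - 1) / y : ℝ) : ℂ) := hτ.mono fun t ht => by
    have hyt : y + t ≠ 0 := by positivity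
    have hreal : (-y - t)⁻¹ = (t / (y + t) - 1) / y := by
      rw [← neg_add', inv_neg]
      field_simp
      ring
    simp only [← hreal, ofReal_inv, ofReal_sub]
  rw [cauchyG, integral_congr_ae hkernel, integral_complex_ofReal, integral_div,
    integral_sub (integrable_div_add hτ hy) (integrable_const 1)]
  simp [negPsi]

theorem tendsto_Ktrans_neg (hτ : ∀ᵐ t ∂τ, 0 ≤ t) {y : ℝ} (hy : 0 < y) :
    Tendsto (fun ε : ℝ => Ktrans τ ((-y : ℝ) + ε * I)) (𝓝[>] 0)
      (𝓝 (y * (negPsi τ y / (1 - negPsi τ y)) : ℝ)) := by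
  have hu : 1 - negPsi τ y ≠ 0 := by linarith [negPsi_lt_one hτ hy]
  have hG : cauchyG τ (-y : ℝ) ≠ 0 := by
    rw [cauchyG_neg hτ hy, ofReal_ne_zero]
    exact div_ne_zero (by linarith [negPsi_lt_one hτ hy]) hy.ne'
  have hlim : ((-y : ℝ) : ℂ) - (cauchyG τ (-y : ℝ))⁻¹
      = (y * (negPsi τ y / (1 - negPsi τ y)) : ℝ) := by
    rw [cauchyG_neg hτ hy, ← ofReal_inv, ← ofReal_sub, ofReal_inj, inv_div, ← neg_sub 1, div_neg]
    field_simp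
    ring
  rw [← hlim]
  exact (tendsto_ofReal_add_mul_I (-y)).sub ((tendsto_cauchyG_neg hτ hy).inv₀ hG)

end NegativeHalfLine

section KTransform

theorem ae_nonneg_iff_measure_Iio_zero {τ : Measure ℝ} : (∀ᵐ t ∂τ, 0 ≤ t) ↔ τ (Iio 0) = 0 := by
  simp only [ae_iff, not_le, Iio_def]

theorem cauchyG_eq_inv_sub_Ktrans (τ : Measure ℝ) (z : ℂ) : cauchyG τ z = (z - Ktrans τ z)⁻¹ := by
  rw [Ktrans, sub_sub_cancel, inv_inv]

variable {μ ν ρ : Measure ℝ} [IsProbabilityMeasure μ] [IsProbabilityMeasure ν]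

theorem tendsto_Ktrans_neg_of_Ktrans_eq_add (hμ : ∀ᵐ t ∂μ, 0 ≤ t) (hν : ∀ᵐ t ∂ν, 0 ≤ t)
    (hK : ∀ z : ℂ, 0 < z.im → Ktrans ρ z = Ktrans μ z + Ktrans ν z) {y : ℝ} (hy : 0 < y) :
    Tendsto (fun ε : ℝ => Ktrans ρ ((-y : ℝ) + ε * I)) (𝓝[>] 0)
      (𝓝 (y * (negPsi μ y / (1 - negPsi μ y) + negPsi ν y / (1 - negPsi ν y)) : ℝ)) := by
  rw [mul_add, ofReal_add]
  refine ((tendsto_Ktrans_neg hμ hy).add (tendsto_Ktrans_neg hν hy)).congr' ?_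
  filter_upwards [self_mem_nhdsWithin] with ε (hε : 0 < ε)
  exact (hK _ (by simpa using hε)).symm

variable [IsProbabilityMeasure ρ]

theorem ae_nonneg_of_Ktrans_eq_add (hμ : ∀ᵐ t ∂μ, 0 ≤ t) (hν : ∀ᵐ t ∂ν, 0 ≤ t)
    (hK : ∀ z : ℂ, 0 < z.im → Ktrans ρ z = Ktrans μ z + Ktrans ν z) : ∀ᵐ t ∂ρ, 0 ≤ t := by
  refine ae_nonneg_iff_measure_Iio_zero.2 (measure_eq_zero_of_tendsto_cauchyG_im fun x hx => ?_)
  obtain ⟨y, rfl⟩ : ∃ y, x = -y := ⟨-x, (neg_neg x).symm⟩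
  have hy : 0 < y := neg_lt_zero.1 hx
  have hKρ := tendsto_Ktrans_neg_of_Ktrans_eq_add hμ hν hK hy
  set k := negPsi μ y / (1 - negPsi μ y) + negPsi ν y / (1 - negPsi ν y)
  have hk0 : 0 ≤ k := add_nonneg
    (div_nonneg (negPsi_nonneg hμ hy) (sub_nonneg.2 (negPsi_lt_one hμ hy).le))
    (div_nonneg (negPsi_nonneg hν hy) (sub_nonneg.2 (negPsi_lt_one hν hy).le))
  have hne : ((-y : ℝ) : ℂ) - (y * k : ℝ) ≠ 0 := by
    rw [← ofReal_sub, ofReal_ne_zero]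
    nlinarith
  have hG := ((tendsto_ofReal_add_mul_I (-y)).sub hKρ).inv₀ hne
  simp only [← cauchyG_eq_inv_sub_Ktrans] at hG
  simpa [← ofReal_sub, ← ofReal_inv, Function.comp_def] using
    (Complex.continuous_im.tendsto _).comp hG

theorem negPsi_div_one_sub_eq_add (hμ : ∀ᵐ t ∂μ, 0 ≤ t) (hν : ∀ᵐ t ∂ν, 0 ≤ t)
    (hρ : ∀ᵐ t ∂ρ, 0 ≤ t) (hK : ∀ z : ℂ, 0 < z.im → Ktrans ρ z = Ktrans μ z + Ktrans ν z)
    {y : ℝ} (hy : 0 < y) :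
    negPsi ρ y / (1 - negPsi ρ y)
      = negPsi μ y / (1 - negPsi μ y) + negPsi ν y / (1 - negPsi ν y) := by
  have hlim := tendsto_nhds_unique (tendsto_Ktrans_neg hρ hy)
    (tendsto_Ktrans_neg_of_Ktrans_eq_add hμ hν hK hy)
  exact mul_left_cancel₀ hy.ne' (ofReal_inj.1 hlim)

end KTransform

section PartialFractions

variable {ι : Type*} [DecidableEq ι]

/-- The coefficients `c i` of the partial fraction expansion
`∏ i ∈ s, x / (a i + x) = ∑ i ∈ s, c i * (x / (a i + x))`. -/
def partialFractionCoeff (s : Finset ι) (a : ι → ℝ) (i : ι) : ℝ :=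
  Lagrange.nodalWeight s a i * a i ^ (s.card - 1)

variable {s : Finset ι} {a : ι → ℝ}

-- Evaluate the Lagrange interpolant of `X ^ (#s - 1)` at the point `-x`.
theorem pow_card_sub_one_eq_prod_mul_sum_partialFractionCoeff (hs : s.Nonempty) (ha : InjOn a s)
    {x : ℝ} (hx : ∀ i ∈ s, a i + x ≠ 0) :
    x ^ (s.card - 1)
      = (∏ i ∈ s, (a i + x)) * ∑ i ∈ s, partialFractionCoeff s a i / (a i + x) := by
  have hcard : s.card - 1 + 1 = s.card := Nat.sub_add_cancel hs.card_pos
  have hdeg : (X ^ (s.card - 1) : ℝ[X]).degree < s.card := by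
    rw [degree_X_pow]
    exact_mod_cast Nat.sub_lt hs.card_pos one_pos
  have hinterp := congrArg (eval (-x)) (Lagrange.eq_interpolate ha hdeg)
  have hnodal : ∏ i ∈ s, (-x - a i) = (-1) ^ (s.card - 1) * -1 * ∏ i ∈ s, (a i + x) := by
    rw [← pow_succ, hcard, ← Finset.prod_const, ← Finset.prod_mul_distrib]
    exact Finset.prod_congr rfl fun i _ => by ring
  have hsum : ∑ i ∈ s, Lagrange.nodalWeight s a i * (-x - a i)⁻¹ * eval (a i) (X ^ (s.card - 1))
      = -∑ i ∈ s, partialFractionCoeff s a i / (a i + x) := by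
    rw [← Finset.sum_neg_distrib]
    refine Finset.sum_congr rfl fun i _ => ?_
    rw [partialFractionCoeff, eval_pow, eval_X, ← neg_add', add_comm x, inv_neg]
    ring
  rw [Lagrange.eval_interpolate_not_at_node _ fun i hi h => hx i hi (by linarith),
    Lagrange.eval_nodal, hnodal, hsum, eval_pow, eval_X, neg_pow] at hinterp
  refine mul_left_cancel₀ (pow_ne_zero (s.card - 1) (neg_ne_zero.2 one_ne_zero)) ?_
  linear_combination hinterp

theorem prod_div_add_eq_sum_partialFractionCoeff (hs : s.Nonempty) (ha : InjOn a s) {x : ℝ}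
    (hx : ∀ i ∈ s, a i + x ≠ 0) :
    ∏ i ∈ s, x / (a i + x) = ∑ i ∈ s, partialFractionCoeff s a i * (x / (a i + x)) := by
  have hfactor : ∑ i ∈ s, partialFractionCoeff s a i * (x / (a i + x))
      = (∑ i ∈ s, partialFractionCoeff s a i / (a i + x)) * x := by
    rw [Finset.sum_mul]
    exact Finset.sum_congr rfl fun i _ => by ring
  rw [hfactor, Finset.prod_div_distrib, Finset.prod_const,
    div_eq_iff (Finset.prod_ne_zero_iff.2 hx), ← Nat.sub_add_cancel hs.card_pos, pow_succ,
    pow_card_sub_one_eq_prod_mul_sum_partialFractionCoeff hs ha hx]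
  ring

theorem sum_partialFractionCoeff_mul_inv_pow (ha : InjOn a s) (ha0 : ∀ i ∈ s, a i ≠ 0) {j : ℕ}
    (hj0 : 0 < j) (hj : j < s.card) : ∑ i ∈ s, partialFractionCoeff s a i * (a i)⁻¹ ^ j = 0 := by
  have hdeg : (X ^ (s.card - 1 - j) : ℝ[X]).degree < s.card := by
    rw [degree_X_pow]
    exact_mod_cast (by omega)
  have hcoeff := Lagrange.coeff_eq_sum ha hdeg
  rw [coeff_X_pow, if_neg (by omega)] at hcoeff
  rw [hcoeff]
  refine Finset.sum_congr rfl fun i hi => ?_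
  rw [partialFractionCoeff, Lagrange.nodalWeight, Finset.prod_inv_distrib, eval_pow, eval_X,
    div_eq_inv_mul, mul_assoc, inv_pow, ← pow_sub₀ _ (ha0 i hi) (by omega)]

theorem X_pow_card_dvd_sum_partialFractionCoeff_comp (ha : InjOn a s) (ha0 : ∀ i ∈ s, a i ≠ 0)
    {P : ℝ[X]} (hP : X ∣ P) :
    X ^ s.card ∣ ∑ i ∈ s, C (partialFractionCoeff s a i) * P.comp (C (a i)⁻¹ * X) := by
  refine X_pow_dvd_iff.2 fun j hj => ?_
  simp only [finsetSum_coeff, coeff_C_mul, comp_C_mul_X_coeff]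
  rcases j.eq_zero_or_pos with rfl | hj0
  · simp [X_dvd_iff.1 hP]
  · simp only [mul_left_comm _ (P.coeff j), ← Finset.mul_sum,
      sum_partialFractionCoeff_mul_inv_pow ha ha0 hj0 hj, mul_zero]

end PartialFractions

section AsympAdditive

theorem abs_integral_comp_div_sub_le {τ : Measure ℝ} [IsFiniteMeasure τ] (hτ : ∀ᵐ t ∂τ, 0 ≤ t)
    {φ χ ψ : ℝ → ℝ} (hφ : IsTestFunction φ) (hχ : IsTestFunction χ) (hψ : IsTestFunction ψ) {ε : ℝ}
    (hle : ∀ s ≥ 0, |φ s - χ s| ≤ ε * ψ s) {y : ℝ} (hy : 0 ≤ y) :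
    |∫ t, φ (t / y) ∂τ - ∫ t, χ (t / y) ∂τ| ≤ ε * ∫ t, ψ (t / y) ∂τ := by
  rw [← integral_sub (hφ.integrable_comp_div hτ hy) (hχ.integrable_comp_div hτ hy),
    ← integral_const_mul]
  exact norm_integral_le_of_norm_le (f := fun t => φ (t / y) - χ (t / y))
    ((hψ.integrable_comp_div hτ hy).const_mul ε) (hτ.mono fun t ht => hle _ (div_nonneg ht hy))

/-- The rescaled integrals `y ↦ ∫ φ(t / y)` of the test function `φ` are additive up to `o(T)`: the
integral against `ρ` is asymptotically the sum of those against `μ` and `ν`. -/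
structure AsympAdditive (T : ℝ → ℝ) (μ ν ρ : Measure ℝ) (φ : ℝ → ℝ) : Prop
    extends IsTestFunction φ where
  isLittleO : (fun y => ∫ t, φ (t / y) ∂ρ - ∫ t, φ (t / y) ∂μ - ∫ t, φ (t / y) ∂ν) =o[atTop] T

namespace AsympAdditive

variable {T : ℝ → ℝ} {μ ν ρ : Measure ℝ} {φ χ : ℝ → ℝ}

theorem const_mul (hφ : AsympAdditive T μ ν ρ φ) (k : ℝ) :
    AsympAdditive T μ ν ρ (fun s => k * φ s) where
  measurable := hφ.measurable.const_mul k
  bounded := by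
    obtain ⟨M, hM⟩ := hφ.bounded
    refine ⟨|k| * M, fun s hs => ?_⟩
    rw [abs_mul]
    exact mul_le_mul_of_nonneg_left (hM s hs) (abs_nonneg k)
  isLittleO := by simpa only [integral_const_mul, mul_sub] using hφ.isLittleO.const_mul_left k

theorem integral_isBigO (hφ : AsympAdditive T μ ν ρ φ)
    (hμ : (fun y => ∫ t, φ (t / y) ∂μ) =O[atTop] T)
    (hν : (fun y => ∫ t, φ (t / y) ∂ν) =O[atTop] T) :
    (fun y => ∫ t, φ (t / y) ∂ρ) =O[atTop] T :=
  ((hφ.isLittleO.isBigO.add hμ).add hν).congr_left fun y => by ring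

variable [IsFiniteMeasure μ] [IsFiniteMeasure ν] [IsFiniteMeasure ρ]

theorem add (hμ : ∀ᵐ t ∂μ, 0 ≤ t) (hν : ∀ᵐ t ∂ν, 0 ≤ t) (hρ : ∀ᵐ t ∂ρ, 0 ≤ t)
    (hφ : AsympAdditive T μ ν ρ φ) (hχ : AsympAdditive T μ ν ρ χ) :
    AsympAdditive T μ ν ρ (fun s => φ s + χ s) where
  measurable := hφ.measurable.add hχ.measurable
  bounded := by
    obtain ⟨M, hM⟩ := hφ.bounded
    obtain ⟨N, hN⟩ := hχ.bounded
    exact ⟨M + N, fun s hs => (abs_add_le _ _).trans (add_le_add (hM s hs) (hN s hs))⟩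
  isLittleO := by
    refine (hφ.isLittleO.add hχ.isLittleO).congr' ?_ .rfl
    filter_upwards [eventually_ge_atTop 0] with y hy
    have hadd : ∀ (τ : Measure ℝ) [IsFiniteMeasure τ], (∀ᵐ t ∂τ, 0 ≤ t) →
        ∫ t, (φ (t / y) + χ (t / y)) ∂τ = ∫ t, φ (t / y) ∂τ + ∫ t, χ (t / y) ∂τ := fun τ _ hτ =>
      integral_add (hφ.integrable_comp_div hτ hy) (hχ.integrable_comp_div hτ hy)
    rw [hadd μ hμ, hadd ν hν, hadd ρ hρ]
    ring

theorem of_approx (hμ : ∀ᵐ t ∂μ, 0 ≤ t) (hν : ∀ᵐ t ∂ν, 0 ≤ t) (hρ : ∀ᵐ t ∂ρ, 0 ≤ t)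
    (hφ : IsTestFunction φ) {ψ : ℝ → ℝ} (hψ : IsTestFunction ψ)
    (hψT : (fun y => ∫ t, ψ (t / y) ∂ρ + ∫ t, ψ (t / y) ∂μ + ∫ t, ψ (t / y) ∂ν) =O[atTop] T)
    (happrox : ∀ ε > 0, ∃ χ, AsympAdditive T μ ν ρ χ ∧ ∀ s ≥ 0, |φ s - χ s| ≤ ε * ψ s) :
    AsympAdditive T μ ν ρ φ := by
  refine ⟨hφ, isLittleO_iff.2 fun c hc => ?_⟩
  obtain ⟨K, hK0, hK⟩ := hψT.exists_pos
  obtain ⟨χ, hχ, hle⟩ := happrox (c / 2 / K) (by positivity)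
  filter_upwards [isLittleO_iff.1 hχ.isLittleO (half_pos hc), hK.bound, eventually_ge_atTop 0]
    with y hχy hψy hy
  have hclose : ∀ (τ : Measure ℝ) [IsFiniteMeasure τ], (∀ᵐ t ∂τ, 0 ≤ t) →
      |∫ t, φ (t / y) ∂τ - ∫ t, χ (t / y) ∂τ| ≤ c / 2 / K * ∫ t, ψ (t / y) ∂τ := fun τ _ hτ =>
    abs_integral_comp_div_sub_le hτ hφ hχ.toIsTestFunction hψ hle hy
  have htotal : c / 2 / K * (∫ t, ψ (t / y) ∂ρ + ∫ t, ψ (t / y) ∂μ + ∫ t, ψ (t / y) ∂ν)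
      ≤ c / 2 * ‖T y‖ := by
    rw [div_mul_eq_mul_div, div_le_iff₀ hK0, mul_assoc, mul_comm _ K]
    exact mul_le_mul_of_nonneg_left ((le_abs_self _).trans hψy) (half_pos hc).le
  rw [Real.norm_eq_abs, abs_le] at hχy ⊢
  have hρy := abs_le.1 (hclose ρ hρ)
  have hμy := abs_le.1 (hclose μ hμ)
  have hνy := abs_le.1 (hclose ν hν)
  constructor <;> linarith

end AsympAdditive

end AsympAdditive

section ProductKernels

variable {ι : Type*} {s : Finset ι} {a : ι → ℝ}

theorem isTestFunction_prod_div_add (ha : ∀ i ∈ s, 0 < a i) :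
    IsTestFunction fun x => ∏ i ∈ s, x / (a i + x) where
  measurable := Finset.measurable_fun_prod s fun i _ =>
    measurable_id.div (measurable_id.const_add _)
  bounded := by
    refine ⟨1, fun x hx => ?_⟩
    rw [Finset.abs_prod]
    refine Finset.prod_le_one (fun i _ => abs_nonneg _) fun i hi => ?_
    rw [abs_of_nonneg (div_add_nonneg (ha i hi) hx)]
    exact (div_add_lt_one (ha i hi) hx).le

theorem integral_prod_div_add_comp_div [DecidableEq ι] {τ : Measure ℝ} [IsFiniteMeasure τ]
    (hτ : ∀ᵐ t ∂τ, 0 ≤ t) (hs : s.Nonempty) (ha : InjOn a s) (ha0 : ∀ i ∈ s, 0 < a i) {y : ℝ}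
    (hy : 0 < y) :
    ∫ t, ∏ i ∈ s, t / y / (a i + t / y) ∂τ
      = ∑ i ∈ s, partialFractionCoeff s a i * negPsi τ (a i * y) := by
  have hkernel : (fun t => ∏ i ∈ s, t / y / (a i + t / y)) =ᵐ[τ]
      fun t => ∑ i ∈ s, partialFractionCoeff s a i * (t / (a i * y + t)) := hτ.mono fun t ht => by
    have hpos : ∀ i ∈ s, a i + t / y ≠ 0 := fun i hi => by
      have := ha0 i hi
      positivity
    simp only [prod_div_add_eq_sum_partialFractionCoeff hs ha hpos]
    refine Finset.sum_congr rfl fun i _ => ?_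
    rw [← mul_div_mul_right (t / y) _ hy.ne', add_mul, div_mul_cancel₀ t hy.ne']
  rw [integral_congr_ae hkernel, integral_finsetSum _ fun i hi =>
    (integrable_div_add hτ (mul_pos (ha0 i hi) hy)).const_mul _]
  simp only [integral_const_mul, negPsi]

theorem RegVarTail.sum_partialFractionCoeff_mul_comp_isLittleO [DecidableEq ι] {μ : Measure ℝ}
    [IsFiniteMeasure μ] {α : ℝ} (hreg : RegVarTail μ α) {f : ℝ → ℝ}
    (hf : InvPolyLittleO (upperTail μ) f) (hs : s.Nonempty) (hαs : α < s.card) (ha : InjOn a s)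
    (ha0 : ∀ i ∈ s, 0 < a i) :
    (fun y => ∑ i ∈ s, partialFractionCoeff s a i * f (a i * y)) =o[atTop] upperTail μ := by
  obtain ⟨P, hP, hfP⟩ := hf
  have herror : (fun y => ∑ i ∈ s, partialFractionCoeff s a i
      * (f (a i * y) - P.eval (a i * y)⁻¹)) =o[atTop] upperTail μ :=
    IsLittleO.fun_sum fun i hi => (hreg.isLittleO_comp_mul_s1 hfP (ha0 i hi)).const_mul_left _
  have hpoly := (isBigO_eval_inv_of_X_pow_dvd (X_pow_card_dvd_sum_partialFractionCoeff_comp ha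
    (fun i hi => (ha0 i hi).ne') hP)).trans_isLittleO (hreg.pow_inv_isLittleO hs.card_pos hαs)
  refine (herror.add hpoly).congr_left fun y => ?_
  simp only [eval_finsetSum, eval_mul, eval_comp, eval_C, eval_X, mul_inv, ← Finset.sum_add_distrib]
  exact Finset.sum_congr rfl fun i _ => by ring

theorem RegVarTail.asympAdditive_prod_div_add {μ ν ρ : Measure ℝ} [IsFiniteMeasure μ]
    [IsFiniteMeasure ν] [IsFiniteMeasure ρ] {α : ℝ} (hreg : RegVarTail μ α)
    (hμ : ∀ᵐ t ∂μ, 0 ≤ t) (hν : ∀ᵐ t ∂ν, 0 ≤ t) (hρ : ∀ᵐ t ∂ρ, 0 ≤ t)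
    (hψ : InvPolyLittleO (upperTail μ) fun y => negPsi ρ y - negPsi μ y - negPsi ν y)
    (hs : s.Nonempty) (hαs : α < s.card) (ha : InjOn a s) (ha0 : ∀ i ∈ s, 0 < a i) :
    AsympAdditive (upperTail μ) μ ν ρ fun x => ∏ i ∈ s, x / (a i + x) := by
  classical
  refine ⟨isTestFunction_prod_div_add ha0,
    (hreg.sum_partialFractionCoeff_mul_comp_isLittleO hψ hs hαs ha ha0).congr' ?_ .rfl⟩
  filter_upwards [eventually_gt_atTop 0] with y hy
  rw [integral_prod_div_add_comp_div hμ hs ha ha0 hy,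
    integral_prod_div_add_comp_div hν hs ha ha0 hy, integral_prod_div_add_comp_div hρ hs ha ha0 hy]
  simp only [mul_sub, Finset.sum_sub_distrib]

end ProductKernels

section PowerKernels

theorem isTestFunction_comp_div_one_add {g : ℝ → ℝ} (hg : Continuous g) :
    IsTestFunction fun x => g (x / (1 + x)) where
  measurable := hg.measurable.comp (measurable_id.div (measurable_id.const_add 1))
  bounded := by
    obtain ⟨M, hM⟩ := isCompact_Icc.exists_bound_of_continuousOn (hg.continuousOn (s := Icc 0 1))
    exact ⟨M, fun x hx => hM _ ⟨div_add_nonneg one_pos hx, (div_add_lt_one one_pos hx).le⟩⟩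

theorem exists_prod_div_add_near_pow (n : ℕ) {ε : ℝ} (hε : 0 < ε) :
    ∃ a : ℕ → ℝ, Function.Injective a ∧ (∀ i, 0 < a i) ∧ ∀ x ≥ 0,
      (1 - ε) * (x / (1 + x)) ^ n ≤ ∏ i ∈ Finset.range n, x / (a i + x) ∧
        ∏ i ∈ Finset.range n, x / (a i + x) ≤ (x / (1 + x)) ^ n := by
  have hlim : Tendsto (fun δ : ℝ => (1 + δ)⁻¹ ^ n) (𝓝[>] 0) (𝓝 1) := by
    have hcont : ContinuousAt (fun δ : ℝ => (1 + δ)⁻¹ ^ n) 0 :=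
      ((continuousAt_const.add continuousAt_id).inv₀ (by simp)).pow n
    simpa using hcont.tendsto.mono_left nhdsWithin_le_nhds
  obtain ⟨δ, hδε, hδ : 0 < δ⟩ := ((hlim.eventually_const_le (sub_lt_self 1 hε)).and
    self_mem_nhdsWithin).exists
  have hshift : ∀ i : ℕ, δ / (i + 1) ≤ δ := fun i => div_le_self hδ.le (by simp)
  refine ⟨fun i => 1 + δ / (i + 1), fun i j hij => ?_, fun i => by positivity, fun x hx => ?_⟩
  · simpa [div_eq_mul_inv, hδ.ne'] using hij
  · have hprod : ∀ b : ℝ, ∏ _i ∈ Finset.range n, b = b ^ n := by simp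
    have hlower : ∀ i : ℕ, (1 + δ)⁻¹ * (x / (1 + x)) ≤ x / (1 + δ / (i + 1) + x) := fun i => by
      rw [inv_mul_eq_div, div_div]
      gcongr
      nlinarith [hshift i]
    constructor
    · calc (1 - ε) * (x / (1 + x)) ^ n ≤ ((1 + δ)⁻¹ * (x / (1 + x))) ^ n := by
            rw [mul_pow]
            gcongr
        _ ≤ ∏ i ∈ Finset.range n, x / (1 + δ / (i + 1) + x) := by
            rw [← hprod]
            exact Finset.prod_le_prod (fun i _ => by positivity) fun i _ => hlower i
    · rw [← hprod]
      refine Finset.prod_le_prod (fun i _ => by positivity) fun i _ => ?_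
      gcongr
      exact le_add_of_nonneg_right (by positivity)

theorem abs_sub_le_of_mul_le_of_le {ε x y : ℝ} (hlower : (1 - ε) * x ≤ y) (hupper : y ≤ x) :
    |x - y| ≤ ε * x := by
  rw [abs_of_nonneg (sub_nonneg.2 hupper)]
  linarith

variable {μ ν ρ : Measure ℝ} [IsFiniteMeasure μ] [IsFiniteMeasure ν] {α : ℝ}

theorem RegVarTail.integral_pow_div_one_add_isBigO (hreg : RegVarTail μ α) (hν : ∀ᵐ t ∂ν, 0 ≤ t)
    (htail : upperTail ν =O[atTop] upperTail μ) {n : ℕ} (hn : α < n) :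
    (fun y => ∫ t, (t / y / (1 + t / y)) ^ n ∂ν) =O[atTop] upperTail μ := by
  refine integral_comp_div_isBigO_of_le (φ := fun x => (x / (1 + x)) ^ n) (K := 1) hν
    (isTestFunction_comp_div_one_add (continuous_pow n)) (isTestFunction_min_one_pow n)
    (fun x hx => by positivity) (fun x hx => ?_) (hreg.integral_min_one_div_pow_isBigO hν htail hn)
  rw [one_mul]
  exact pow_le_pow_left₀ (by positivity) (by simpa using div_add_le_min one_pos hx) n

variable [IsFiniteMeasure ρ]

theorem RegVarTail.exists_asympAdditive_near_pow (hreg : RegVarTail μ α) (hμ : ∀ᵐ t ∂μ, 0 ≤ t)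
    (hν : ∀ᵐ t ∂ν, 0 ≤ t) (hρ : ∀ᵐ t ∂ρ, 0 ≤ t)
    (hψ : InvPolyLittleO (upperTail μ) fun y => negPsi ρ y - negPsi μ y - negPsi ν y)
    {n : ℕ} (hn0 : 0 < n) (hn : α < n) {ε : ℝ} (hε : 0 < ε) :
    ∃ χ, AsympAdditive (upperTail μ) μ ν ρ χ ∧ ∀ x ≥ 0, 0 ≤ χ x ∧
      (1 - ε) * (x / (1 + x)) ^ n ≤ χ x ∧ χ x ≤ (x / (1 + x)) ^ n := by
  obtain ⟨a, ha, ha0, hnear⟩ := exists_prod_div_add_near_pow n hε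
  exact ⟨_, hreg.asympAdditive_prod_div_add hμ hν hρ hψ (s := Finset.range n)
    (Finset.nonempty_range_iff.2 hn0.ne') (by simpa using hn) ha.injOn fun i _ => ha0 i,
    fun x hx => ⟨Finset.prod_nonneg fun i _ => div_add_nonneg (ha0 i) hx, hnear x hx⟩⟩

theorem RegVarTail.integral_pow_div_one_add_isBigO_of_negPsi (hreg : RegVarTail μ α)
    (hμ : ∀ᵐ t ∂μ, 0 ≤ t) (hν : ∀ᵐ t ∂ν, 0 ≤ t) (hρ : ∀ᵐ t ∂ρ, 0 ≤ t)
    (htail : upperTail ν =O[atTop] upperTail μ)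
    (hψ : InvPolyLittleO (upperTail μ) fun y => negPsi ρ y - negPsi μ y - negPsi ν y)
    {n : ℕ} (hn0 : 0 < n) (hn : α < n) :
    (fun y => ∫ t, (t / y / (1 + t / y)) ^ n ∂ρ) =O[atTop] upperTail μ := by
  have hpow := isTestFunction_comp_div_one_add (continuous_pow n)
  obtain ⟨χ, hχ, hnear⟩ :=
    hreg.exists_asympAdditive_near_pow hμ hν hρ hψ hn0 hn (half_pos (zero_lt_one' ℝ))
  have hle : ∀ x ≥ 0, χ x ≤ 1 * (x / (1 + x)) ^ n := fun x hx => by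
    linarith [(hnear x hx).2.2]
  have hχρ := hχ.integral_isBigO
    (integral_comp_div_isBigO_of_le hμ hχ.toIsTestFunction hpow (fun x hx => (hnear x hx).1) hle
      (hreg.integral_pow_div_one_add_isBigO hμ (isBigO_refl _ _) hn))
    (integral_comp_div_isBigO_of_le hν hχ.toIsTestFunction hpow (fun x hx => (hnear x hx).1) hle
      (hreg.integral_pow_div_one_add_isBigO hν htail hn))
  exact integral_comp_div_isBigO_of_le (K := 2) hρ hpow hχ.toIsTestFunction
    (fun x hx => by positivity) (fun x hx => by linarith [(hnear x hx).2.1]) hχρ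

theorem RegVarTail.sum_integral_pow_div_one_add_isBigO (hreg : RegVarTail μ α)
    (hμ : ∀ᵐ t ∂μ, 0 ≤ t) (hν : ∀ᵐ t ∂ν, 0 ≤ t) (hρ : ∀ᵐ t ∂ρ, 0 ≤ t)
    (htail : upperTail ν =O[atTop] upperTail μ)
    (hψ : InvPolyLittleO (upperTail μ) fun y => negPsi ρ y - negPsi μ y - negPsi ν y)
    {n : ℕ} (hn0 : 0 < n) (hn : α < n) :
    (fun y => ∫ t, (t / y / (1 + t / y)) ^ n ∂ρ + ∫ t, (t / y / (1 + t / y)) ^ n ∂μ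
      + ∫ t, (t / y / (1 + t / y)) ^ n ∂ν) =O[atTop] upperTail μ :=
  ((hreg.integral_pow_div_one_add_isBigO_of_negPsi hμ hν hρ htail hψ hn0 hn).add
    (hreg.integral_pow_div_one_add_isBigO hμ (isBigO_refl _ _) hn)).add
    (hreg.integral_pow_div_one_add_isBigO hν htail hn)

theorem RegVarTail.asympAdditive_pow_div_one_add (hreg : RegVarTail μ α)
    (hμ : ∀ᵐ t ∂μ, 0 ≤ t) (hν : ∀ᵐ t ∂ν, 0 ≤ t) (hρ : ∀ᵐ t ∂ρ, 0 ≤ t)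
    (htail : upperTail ν =O[atTop] upperTail μ)
    (hψ : InvPolyLittleO (upperTail μ) fun y => negPsi ρ y - negPsi μ y - negPsi ν y)
    {n : ℕ} (hn0 : 0 < n) (hn : α < n) :
    AsympAdditive (upperTail μ) μ ν ρ fun x => (x / (1 + x)) ^ n := by
  have hpow := isTestFunction_comp_div_one_add (continuous_pow n)
  refine .of_approx hμ hν hρ hpow hpow
    (hreg.sum_integral_pow_div_one_add_isBigO hμ hν hρ htail hψ hn0 hn) fun ε hε => ?_
  obtain ⟨χ, hχ, hnear⟩ := hreg.exists_asympAdditive_near_pow hμ hν hρ hψ hn0 hn hε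
  exact ⟨χ, hχ, fun x hx => abs_sub_le_of_mul_le_of_le (hnear x hx).2.1 (hnear x hx).2.2⟩

end PowerKernels

section ContinuousKernels

variable {T : ℝ → ℝ} {μ ν ρ : Measure ℝ} [IsFiniteMeasure μ] [IsFiniteMeasure ν]
  [IsFiniteMeasure ρ] {n : ℕ}

theorem asympAdditive_pow_mul_eval (hμ : ∀ᵐ t ∂μ, 0 ≤ t) (hν : ∀ᵐ t ∂ν, 0 ≤ t)
    (hρ : ∀ᵐ t ∂ρ, 0 ≤ t) (hpow : ∀ m ≥ n, AsympAdditive T μ ν ρ fun x => (x / (1 + x)) ^ m)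
    (P : ℝ[X]) :
    AsympAdditive T μ ν ρ fun x => (x / (1 + x)) ^ n * P.eval (x / (1 + x)) := by
  induction P using Polynomial.induction_on' with
  | add P Q hP hQ => simpa only [eval_add, mul_add] using hP.add hμ hν hρ hQ
  | monomial k c =>
    simpa only [eval_monomial, mul_left_comm _ c, ← pow_add]
      using (hpow (n + k) (n.le_add_right k)).const_mul c

theorem asympAdditive_pow_mul_comp (hμ : ∀ᵐ t ∂μ, 0 ≤ t) (hν : ∀ᵐ t ∂ν, 0 ≤ t)
    (hρ : ∀ᵐ t ∂ρ, 0 ≤ t) (hpow : ∀ m ≥ n, AsympAdditive T μ ν ρ fun x => (x / (1 + x)) ^ m)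
    (hpowT : (fun y => ∫ t, (t / y / (1 + t / y)) ^ n ∂ρ + ∫ t, (t / y / (1 + t / y)) ^ n ∂μ
      + ∫ t, (t / y / (1 + t / y)) ^ n ∂ν) =O[atTop] T) {g : ℝ → ℝ} (hg : Continuous g) :
    AsympAdditive T μ ν ρ fun x => (x / (1 + x)) ^ n * g (x / (1 + x)) := by
  refine .of_approx hμ hν hρ (isTestFunction_comp_div_one_add ((continuous_pow n).mul hg))
    (hpow n le_rfl).toIsTestFunction hpowT fun ε hε => ?_
  obtain ⟨P, hP⟩ := exists_polynomial_near_of_continuousOn 0 1 g hg.continuousOn ε hε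
  refine ⟨_, asympAdditive_pow_mul_eval hμ hν hρ hpow P, fun x hx => ?_⟩
  rw [← mul_sub, abs_mul, abs_of_nonneg (by positivity), mul_comm, abs_sub_comm]
  gcongr
  exact (hP _ ⟨div_add_nonneg one_pos hx, (div_add_lt_one one_pos hx).le⟩).le

theorem asympAdditive_comp_of_eqOn_zero (hμ : ∀ᵐ t ∂μ, 0 ≤ t) (hν : ∀ᵐ t ∂ν, 0 ≤ t)
    (hρ : ∀ᵐ t ∂ρ, 0 ≤ t) (hpow : ∀ m ≥ n, AsympAdditive T μ ν ρ fun x => (x / (1 + x)) ^ m)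
    (hpowT : (fun y => ∫ t, (t / y / (1 + t / y)) ^ n ∂ρ + ∫ t, (t / y / (1 + t / y)) ^ n ∂μ
      + ∫ t, (t / y / (1 + t / y)) ^ n ∂ν) =O[atTop] T) {h : ℝ → ℝ} (hh : Continuous h)
    {r : ℝ} (hr : 0 < r) (hzero : EqOn h 0 (Iic r)) :
    AsympAdditive T μ ν ρ fun x => h (x / (1 + x)) := by
  have hmax : ∀ w, max w r ^ n ≠ 0 := fun w => (pow_pos (lt_max_of_lt_right hr) n).ne'
  have hdiv : ∀ w, h w = w ^ n * (h w / max w r ^ n) := fun w => by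
    rcases le_or_gt w r with hw | hw
    · simp [hzero hw]
    · rw [mul_div_left_comm, max_eq_left hw.le, div_self (pow_ne_zero n (hr.trans hw).ne'), mul_one]
  have hcont : Continuous fun w => h w / max w r ^ n :=
    hh.div ((continuous_id.max continuous_const).pow n) hmax
  simpa only [← hdiv] using asympAdditive_pow_mul_comp hμ hν hρ hpow hpowT hcont

end ContinuousKernels

section TailAsymptotics

theorem exists_continuous_between_indicators {l : ℝ} (hl : 1 < l) :
    ∃ h : ℝ → ℝ, Continuous h ∧ EqOn h 0 (Iic (1 / 2)) ∧ ∀ x ≥ 0,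
      (Ioi l).indicator 1 x ≤ h (x / (1 + x)) ∧ h (x / (1 + x)) ≤ (Ioi 1).indicator 1 x := by
  have hl2 : 1 / 2 < l / (1 + l) := by
    rw [div_lt_div_iff₀ two_pos (by positivity)]
    linarith
  obtain ⟨h, hzero, hone, h01⟩ := exists_continuous_zero_one_of_isClosed
    (isClosed_Iic (a := (1 / 2 : ℝ))) (isClosed_Ici (a := l / (1 + l)))
    (Iic_disjoint_Ici.2 (not_le.2 hl2))
  refine ⟨h, h.continuous, hzero, fun x hx => ⟨?_, ?_⟩⟩
  · refine indicator_apply_le' (fun hlx => ?_) fun _ => (h01 _).1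
    rw [mem_Ioi] at hlx
    have hmem : l / (1 + l) ≤ x / (1 + x) := by
      rw [div_le_div_iff₀ (by positivity) (by positivity)]
      linarith
    exact (hone hmem).ge
  · refine le_indicator_apply (fun _ => (h01 _).2) fun hx1 => ?_
    rw [mem_Ioi, not_lt] at hx1
    have hmem : x / (1 + x) ≤ 1 / 2 := by
      rw [div_le_div_iff₀ (by positivity) two_pos]
      linarith
    exact (hzero hmem).le

variable {τ : Measure ℝ} [IsFiniteMeasure τ]

theorem upperTail_mul_le_integral_comp_div (hτ : ∀ᵐ t ∂τ, 0 ≤ t) {φ : ℝ → ℝ}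
    (hφ : IsTestFunction φ) {l : ℝ} (hl : ∀ x ≥ 0, (Ioi l).indicator 1 x ≤ φ x) {y : ℝ}
    (hy : 0 < y) : upperTail τ (l * y) ≤ ∫ t, φ (t / y) ∂τ := by
  rw [upperTail, ← integral_indicator_one measurableSet_Ioi]
  refine integral_mono_ae ((integrable_const 1).indicator measurableSet_Ioi)
    (hφ.integrable_comp_div hτ hy.le) (hτ.mono fun t ht => (hl _ (div_nonneg ht hy.le)).trans' ?_)
  simp [indicator, lt_div_iff₀ hy]

theorem integral_comp_div_le_upperTail_mul (hτ : ∀ᵐ t ∂τ, 0 ≤ t) {φ : ℝ → ℝ}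
    (hφ : IsTestFunction φ) {l : ℝ} (hl : ∀ x ≥ 0, φ x ≤ (Ioi l).indicator 1 x) {y : ℝ}
    (hy : 0 < y) : ∫ t, φ (t / y) ∂τ ≤ upperTail τ (l * y) := by
  rw [upperTail, ← integral_indicator_one measurableSet_Ioi]
  refine integral_mono_ae (hφ.integrable_comp_div hτ hy.le)
    ((integrable_const 1).indicator measurableSet_Ioi)
    (hτ.mono fun t ht => (hl _ (div_nonneg ht hy.le)).trans ?_)
  simp [indicator, lt_div_iff₀ hy]

theorem exists_isLittleO_dilation_bounds {T : ℝ → ℝ} {μ ν ρ : Measure ℝ} [IsFiniteMeasure μ]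
    [IsFiniteMeasure ν] [IsFiniteMeasure ρ] (hμ : ∀ᵐ t ∂μ, 0 ≤ t) (hν : ∀ᵐ t ∂ν, 0 ≤ t)
    (hρ : ∀ᵐ t ∂ρ, 0 ≤ t) (hadd : ∀ h : ℝ → ℝ, Continuous h → EqOn h 0 (Iic (1 / 2)) →
      AsympAdditive T μ ν ρ fun x => h (x / (1 + x))) {l : ℝ} (hl : 1 < l) :
    ∃ e : ℝ → ℝ, e =o[atTop] T ∧ ∀ᶠ y in atTop,
      upperTail μ (l * y) + upperTail ν (l * y) ≤ upperTail ρ y + e y ∧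
        upperTail ρ (l * y) ≤ upperTail μ y + upperTail ν y + e y := by
  obtain ⟨h, hcont, hzero, hbetween⟩ := exists_continuous_between_indicators hl
  obtain ⟨hφ, hdefect⟩ := hadd h hcont hzero
  refine ⟨_, hdefect.norm_left, ?_⟩
  filter_upwards [eventually_gt_atTop 0] with y hy
  set J : Measure ℝ → ℝ := fun τ => ∫ t, h (t / y / (1 + t / y)) ∂τ
  have hbounds : ∀ (τ : Measure ℝ) [IsFiniteMeasure τ], (∀ᵐ t ∂τ, 0 ≤ t) →
      upperTail τ (l * y) ≤ J τ ∧ J τ ≤ upperTail τ y := fun τ _ hτ =>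
    ⟨upperTail_mul_le_integral_comp_div hτ hφ (fun x hx => (hbetween x hx).1) hy, by
      simpa using integral_comp_div_le_upperTail_mul hτ hφ (fun x hx => (hbetween x hx).2) hy⟩
  have hμy := hbounds μ hμ
  have hνy := hbounds ν hν
  have hρy := hbounds ρ hρ
  have hdefecty := abs_le.1 (le_refl |J ρ - J μ - J ν|)
  rw [Real.norm_eq_abs]
  constructor <;> linarith

namespace RegVarTail

variable {μ : Measure ℝ} [IsFiniteMeasure μ] {α : ℝ}

theorem tendsto_comp_mul_div (hreg : RegVarTail μ α) {m : ℝ → ℝ} {k : ℝ}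
    (hm : Tendsto (fun y => m y / upperTail μ y) atTop (𝓝 k)) {a : ℝ} (ha : 0 < a) :
    Tendsto (fun y => m (a * y) / upperTail μ y) atTop (𝓝 (k * a ^ (-α))) := by
  refine ((hm.comp (tendsto_id.const_mul_atTop ha)).mul (hreg.tendsto_ratio ha)).congr' ?_
  filter_upwards [eventually_ge_atTop 0] with y hy
  exact div_mul_div_cancel₀ (hreg.upperTail_pos (by positivity)).ne'

theorem tendsto_div_of_forall_dilation (hreg : RegVarTail μ α) {S m : ℝ → ℝ} {k : ℝ}
    (hm : Tendsto (fun y => m y / upperTail μ y) atTop (𝓝 k))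
    (hdilation : ∀ l > 1, ∃ e : ℝ → ℝ, e =o[atTop] upperTail μ ∧
      ∀ᶠ y in atTop, m (l * y) ≤ S y + e y ∧ S (l * y) ≤ m y + e y) :
    Tendsto (fun y => S y / upperTail μ y) atTop (𝓝 k) := by
  have hscale : Tendsto (fun a : ℝ => k * a ^ (-α)) (𝓝 1) (𝓝 k) := by
    simpa using ((Real.continuousAt_rpow_const 1 (-α) (.inl one_ne_zero)).tendsto).const_mul k
  refine tendsto_order.2 ⟨fun L hL => ?_, fun U hU => ?_⟩
  · obtain ⟨l, hLl, hl : 1 < l⟩ := (((hscale.eventually (lt_mem_nhds hL)).filter_mono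
      nhdsWithin_le_nhds).and (self_mem_nhdsWithin (s := Ioi 1))).exists
    obtain ⟨e, he, hle⟩ := hdilation l hl
    have hlim := (hreg.tendsto_comp_mul_div hm (zero_lt_one.trans hl)).sub he.tendsto_div_nhds_zero
    filter_upwards [hlim.eventually (lt_mem_nhds (by simpa using hLl)), hle,
      hreg.eventually_upperTail_pos] with y hLy ⟨hy, _⟩ hT
    refine hLy.trans_le ?_
    rw [← sub_div]
    gcongr
    linarith
  · obtain ⟨a, ⟨haU, ha0⟩, ha1 : a < 1⟩ := ((((hscale.eventually (gt_mem_nhds hU)).and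
      (lt_mem_nhds one_pos)).filter_mono nhdsWithin_le_nhds).and
        (self_mem_nhdsWithin (s := Iio 1))).exists
    obtain ⟨e, he, hle⟩ := hdilation a⁻¹ ((one_lt_inv₀ ha0).2 ha1)
    have hlim := (hreg.tendsto_comp_mul_div hm ha0).add
      (hreg.isLittleO_comp_mul_s1 he ha0).tendsto_div_nhds_zero
    filter_upwards [hlim.eventually (gt_mem_nhds (by simpa using haU)),
      (tendsto_id.const_mul_atTop ha0).eventually hle, hreg.eventually_upperTail_pos]
      with y hUy ⟨_, hy⟩ hT
    refine hUy.trans_le' ?_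
    rw [id, inv_mul_cancel_left₀ ha0.ne'] at hy
    rw [← add_div]
    gcongr

end RegVarTail

end TailAsymptotics

section BooleanConvolution

namespace RegVarTail

variable {μ ν ρ : Measure ℝ} {α : ℝ}

theorem asympAdditive_comp_div_one_add [IsFiniteMeasure μ] [IsFiniteMeasure ν] [IsFiniteMeasure ρ]
    (hreg : RegVarTail μ α) (hμ : ∀ᵐ t ∂μ, 0 ≤ t) (hν : ∀ᵐ t ∂ν, 0 ≤ t) (hρ : ∀ᵐ t ∂ρ, 0 ≤ t)
    (htail : upperTail ν =O[atTop] upperTail μ)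
    (hψ : InvPolyLittleO (upperTail μ) fun y => negPsi ρ y - negPsi μ y - negPsi ν y)
    {h : ℝ → ℝ} (hh : Continuous h) {r : ℝ} (hr : 0 < r) (hzero : EqOn h 0 (Iic r)) :
    AsympAdditive (upperTail μ) μ ν ρ fun x => h (x / (1 + x)) := by
  obtain ⟨n, hn⟩ := exists_nat_gt (max α 0)
  rw [max_lt_iff, Nat.cast_pos] at hn
  refine asympAdditive_comp_of_eqOn_zero hμ hν hρ (fun m hm => ?_)
    (hreg.sum_integral_pow_div_one_add_isBigO hμ hν hρ htail hψ hn.2 hn.1) hh hr hzero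
  exact hreg.asympAdditive_pow_div_one_add hμ hν hρ htail hψ (hn.2.trans_le hm)
    (hn.1.trans_le (Nat.cast_le.2 hm))

variable [IsProbabilityMeasure μ] [IsProbabilityMeasure ν] [IsProbabilityMeasure ρ]

theorem invPolyLittleO_negPsi_sub_of_Ktrans_eq_add (hreg : RegVarTail μ α)
    (hμ : ∀ᵐ t ∂μ, 0 ≤ t) (hν : ∀ᵐ t ∂ν, 0 ≤ t) (hρ : ∀ᵐ t ∂ρ, 0 ≤ t)
    (htail : upperTail ν =O[atTop] upperTail μ)
    (hK : ∀ z : ℂ, 0 < z.im → Ktrans ρ z = Ktrans μ z + Ktrans ν z) :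
    InvPolyLittleO (upperTail μ) fun y => negPsi ρ y - negPsi μ y - negPsi ν y := by
  obtain ⟨n, hn⟩ := exists_nat_gt (max α 0)
  rw [max_lt_iff, Nat.cast_pos] at hn
  obtain ⟨b, hb, hbb, hinv, hψ⟩ := hreg.exists_invPolyBigO_negPsi
  have hpos := eventually_gt_atTop (0 : ℝ)
  exact invPolyLittleO_sub_sub_of_div_one_sub_eq_add (tendsto_upperTail_atTop μ)
    (hreg.pow_inv_isLittleO hn.2 hn.1) hb hbb hinv (hψ μ inferInstance hμ (isBigO_refl _ _))
    (hψ ν inferInstance hν htail) (hpos.mono fun _ => negPsi_lt_one hρ)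
    (hpos.mono fun _ hy => ⟨negPsi_nonneg hμ hy, negPsi_lt_one hμ hy⟩)
    (hpos.mono fun _ => negPsi_lt_one hν)
    (hpos.mono fun _ => negPsi_div_one_sub_eq_add hμ hν hρ hK)

end RegVarTail

theorem tendsto_div_const_mul_one_iff {ι : Type*} {𝓕 : Filter ι} {f g : ι → ℝ} {c : ℝ}
    (hc : c ≠ 0) :
    Tendsto (fun i => f i / (c * g i)) 𝓕 (𝓝 1) ↔ Tendsto (fun i => f i / g i) 𝓕 (𝓝 c) := by
  simpa only [smul_eq_mul, ← mul_div_assoc, mul_div_mul_left _ _ hc, mul_one] using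
    (tendsto_const_smul_iff₀ (f := fun i => f i / (c * g i)) (a := (1 : ℝ)) hc).symm

end BooleanConvolution

theorem boolean_additive_tail_balanced_general {α c : ℝ} {μ ν ρ : Measure ℝ}
    [IsProbabilityMeasure μ] [IsProbabilityMeasure ν] [IsProbabilityMeasure ρ]
    (hsuppμ : μ (Iio 0) = 0) (hsuppν : ν (Iio 0) = 0) (hreg : RegVarTail μ α)
    (hbal : Tendsto (fun y => upperTail ν y / upperTail μ y) atTop (𝓝 c))
    (hK : ∀ z : ℂ, 0 < z.im → Ktrans ρ z = Ktrans μ z + Ktrans ν z) :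
    Tendsto (fun y => upperTail ρ y / upperTail μ y) atTop (𝓝 (1 + c)) := by
  have hμ := ae_nonneg_iff_measure_Iio_zero.2 hsuppμ
  have hν := ae_nonneg_iff_measure_Iio_zero.2 hsuppν
  have hρ := ae_nonneg_of_Ktrans_eq_add hμ hν hK
  have hTne : ∀ᶠ y in atTop, upperTail μ y ≠ 0 :=
    hreg.eventually_upperTail_pos.mono fun _ => ne_of_gt
  have htail : upperTail ν =O[atTop] upperTail μ :=
    isBigO_of_div_tendsto_nhds (hTne.mono fun _ hy h0 => absurd h0 hy) c hbal
  have hψ := hreg.invPolyLittleO_negPsi_sub_of_Ktrans_eq_add hμ hν hρ htail hK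
  have hsum : Tendsto (fun y => (upperTail μ y + upperTail ν y) / upperTail μ y) atTop
      (𝓝 (1 + c)) := by
    refine (hbal.const_add 1).congr' (hTne.mono fun y hy => ?_)
    simp only [add_div, div_self hy]
  exact hreg.tendsto_div_of_forall_dilation hsum fun l hl =>
    exists_isLittleO_dilation_bounds hμ hν hρ (fun h hh hzero =>
      hreg.asympAdditive_comp_div_one_add hμ hν hρ htail hψ hh one_half_pos hzero) hl

/-- additive Boolean convolution of tail-balanced regularly varying measures. -/
theorem boolean_additive_tail_balanced
    (α : ℝ) (hα : 0 ≤ α) (c : ℝ) (hc : 0 < c)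
    (μ ν : Measure ℝ) [IsProbabilityMeasure μ] [IsProbabilityMeasure ν]
    (hsuppμ : μ (Set.Iio (0 : ℝ)) = 0) (hsuppν : ν (Set.Iio (0 : ℝ)) = 0)
    (hregμ : RegVarTail μ α) (hregν : RegVarTail ν α)
    (hbal : Filter.Tendsto
      (fun y : ℝ => (ν (Set.Ioi y)).toReal / (c * (μ (Set.Ioi y)).toReal))
      Filter.atTop (nhds 1))
    (ρ : Measure ℝ) [IsProbabilityMeasure ρ]
    (hK : ∀ z : ℂ, 0 < z.im → Ktrans ρ z = Ktrans μ z + Ktrans ν z) :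
    Filter.Tendsto
      (fun y : ℝ => (ρ (Set.Ioi y)).toReal / ((1 + c) * (μ (Set.Ioi y)).toReal))
      Filter.atTop (nhds 1) :=
  (tendsto_div_const_mul_one_iff (by positivity)).2 <| boolean_additive_tail_balanced_general
    hsuppμ hsuppν hregμ ((tendsto_div_const_mul_one_iff hc.ne').1 hbal) hK
end
end
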